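/- Let γ ∈ ℝ, let q ≥ 3 be fixed, and let K be a location-scale invariant kernel, not everywhere constant, such that E[|K((Z_{q−j:q−1})_{j=1}^{q})|^p] < ∞ for all p > 0 (Z's iid standard GP(γ), Z_{0:q−1} := 0); set θ = E[K((Z_{q−j:q−1})_{j=1}^{q})]. Let ℓ, m be integers with ℓ ≥ 2 and m ≥ ℓ + q, let Z_1,…,Z_{2m−ℓ} be iid standard GP(γ), and define Ξ_{ℓ,m} = K_m(Z_{[1:m]}) K_m(Z_{[(m−ℓ+1):(2m−ℓ)]}) and N_{ℓ,m} = Σ_{i=m−ℓ+1}^{m} 1{Z_i is in the top-q of Z_{[1:m]} or of Z_{[(m−ℓ+1):(2m−ℓ)]}}. Then E[Ξ_{ℓ,m}; N_{ℓ,m} = 0] = P(N_{ℓ,m} = 0) θ², and |E[Ξ_{ℓ,m}; N_{ℓ,m} = 0] − ℓ E[Ξ_{1,m}; N_{1,m} = 0] + (ℓ−1) θ²| ≤ θ² q² ℓ(ℓ−1) / ((m−1)(m−ℓ+1)). -/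

import Mathlib

open MeasureTheory ProbabilityTheory Filter Real Set Topology
open scoped ENNReal NNReal Classical

noncomputable section

/-- The `j`-th largest entry of the tuple `x` (`j = 0` gives the maximum, `j = 1` the
second largest, ...); `0` when `j` is out of range. -/
def descStat {m : ℕ} (x : Fin m → ℝ) (j : ℕ) : ℝ :=
  if h : j < m then (x ∘ Tuple.sort x) ⟨m - 1 - j, by omega⟩ else 0

/-- The kernel of degree `m` obtained from `K` by applying it to the top-`q`
(descending) order statistics: `K_m(x_1,…,x_m) = K(x_{m:m},…,x_{m−q+1:m})`. -/
def Km {q : ℕ} (K : (Fin q → ℝ) → ℝ) (m : ℕ) (x : Fin m → ℝ) : ℝ :=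
  K fun j => descStat x (j : ℕ)

/-- `K(a x_1 + b, …, a x_q + b) = K(x_1, …, x_q)` for all `a > 0`, `b ∈ ℝ`. -/
def LocScaleInvariant {q : ℕ} (K : (Fin q → ℝ) → ℝ) : Prop :=
  ∀ a b : ℝ, 0 < a → ∀ x : Fin q → ℝ, K (fun j => a * x j + b) = K x

/-- `h_γ(y) = (y^γ - 1)/γ`, interpreted as `log y` when `γ = 0`. -/
def hGamma (γ : ℝ) (y : ℝ) : ℝ := if γ = 0 then Real.log y else (y ^ γ - 1) / γ

lemma measurable_hGamma (γ : ℝ) : Measurable (hGamma γ) := by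
  unfold hGamma
  split_ifs
  · exact Real.measurable_log
  · fun_prop

/-- The uniform distribution on `(0,1)`. -/
def unif01 : Measure ℝ := volume.restrict (Set.Ioo (0:ℝ) 1)

instance : IsProbabilityMeasure unif01 := ⟨by simp [unif01]⟩

/-- The standard Pareto(1) distribution, with cdf `1 - 1/y` for `y ≥ 1`. -/
def pareto1 : Measure ℝ := ProbabilityTheory.paretoMeasure 1 1

instance : IsProbabilityMeasure pareto1 :=
  ProbabilityTheory.isProbabilityMeasure_paretoMeasure one_pos one_pos

/-- The standard generalized Pareto distribution `GP(γ)`: the law of `h_γ(Y)` for `Y`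
standard Pareto(1). -/
def gpMeasure (γ : ℝ) : Measure ℝ := pareto1.map (hGamma γ)

instance (γ : ℝ) : IsProbabilityMeasure (gpMeasure γ) :=
  Measure.isProbabilityMeasure_map (measurable_hGamma γ).aemeasurable

/-- The unit exponential distribution: the law of `-log U` for `U` uniform on `(0,1)`. -/
def expMeasure1 : Measure ℝ := unif01.map fun u => -Real.log u

instance : IsProbabilityMeasure expMeasure1 :=
  Measure.isProbabilityMeasure_map Real.measurable_log.neg.aemeasurable

/-- The Erlang(q) distribution: the law of the sum of `q` independent unit exponentials. -/
def erlangMeasure (q : ℕ) : Measure ℝ :=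
  (Measure.pi fun _ : Fin q => expMeasure1).map fun e => ∑ i, e i

instance (q : ℕ) : IsProbabilityMeasure (erlangMeasure q) :=
  Measure.isProbabilityMeasure_map
    (Finset.measurable_fun_sum _ fun i _ => measurable_pi_apply i).aemeasurable

/-- The joint law of `r` iid `GP(γ)` random variables. -/
def gpPi (γ : ℝ) (r : ℕ) : Measure (Fin r → ℝ) := Measure.pi fun _ => gpMeasure γ

instance (γ : ℝ) (r : ℕ) : IsProbabilityMeasure (gpPi γ r) := by
  unfold gpPi; infer_instance

/-- The vector `(Z_{q-j:q-1})_{j=1}^{q}`: the descending order statistics of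
`z_1,…,z_{q-1}` with an extra last entry `Z_{0:q-1} := 0`. -/
def refVec {q : ℕ} (z : Fin (q-1) → ℝ) : Fin q → ℝ := fun j => descStat z (j : ℕ)

/-- `θ = E[K((Z_{q-j:q-1})_{j=1}^{q})]` for iid `GP(γ)` variables `Z_1,…,Z_{q-1}`. -/
def thetaK (γ : ℝ) {q : ℕ} (K : (Fin q → ℝ) → ℝ) : ℝ :=
  ∫ z, K (refVec z) ∂(gpPi γ (q-1))

/-- all moments of `K((Z_{q-j:q-1})_{j=1}^{q})` are finite. -/
def MomentCond (γ : ℝ) {q : ℕ} (K : (Fin q → ℝ) → ℝ) : Prop :=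
  ∀ p : ℝ, 0 < p →
    ∫⁻ z, ENNReal.ofReal (|K (refVec z)| ^ p) ∂(gpPi γ (q-1)) < ⊤

/-- The asymptotic variance
`σ²_K(γ) = ∫_0^∞ (E[K̄_{q+1}((Z_{q-j:q-1})_{j=1}^q, h_γ(S_q/x))])² dx`. -/
def sigmaSqK (γ : ℝ) {q : ℕ} (K : (Fin q → ℝ) → ℝ) : ℝ :=
  ∫ x in Set.Ioi (0:ℝ),
    (∫ zs : (Fin (q-1) → ℝ) × ℝ,
        (Km K (q+1) (Fin.snoc (refVec zs.1) (hGamma γ (zs.2 / x))) - thetaK γ K)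
      ∂((gpPi γ (q-1)).prod (erlangMeasure q))) ^ 2

/-- The U-statistic with kernel `K_m` evaluated on the sample `z`. -/
def UStat {q : ℕ} (K : (Fin q → ℝ) → ℝ) (m n : ℕ) (z : Fin n → ℝ) : ℝ :=
  ((n.choose m : ℝ))⁻¹ *
    ∑ I ∈ Finset.powersetCard m (Finset.univ : Finset (Fin n)),
      Km K I.card fun j => z (I.orderIsoOfFin rfl j).1

/-- Condition on the degree sequence: `m = o(n^{1-ε})` and `log n = o(m^{1-δ})`. -/
def DegreeCond (m : ℕ → ℕ) : Prop :=
  ∃ ε > (0:ℝ), ∃ δ > (0:ℝ),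
    Tendsto (fun n => (m n : ℝ) / (n : ℝ) ^ (1 - ε)) atTop (𝓝 0) ∧
    Tendsto (fun n : ℕ => Real.log n / (m n : ℝ) ^ (1 - δ)) atTop (𝓝 0)

/-- `ζ_{m,ℓ} = cov(K_m(Z_S), K_m(Z_{S'}))` for the blocks `S = [1:m]`,
`S' = [(m-ℓ+1):(2m-ℓ)]` (zero-indexed here), which overlap in `ℓ` indices. -/
def zetaCov {Ω : Type*} [MeasurableSpace Ω] (P : Measure Ω) {q : ℕ}
    (K : (Fin q → ℝ) → ℝ) (Z : ℕ → Ω → ℝ) (m ℓ : ℕ) : ℝ :=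
  (∫ ω, Km K m (fun i : Fin m => Z i ω) * Km K m (fun i : Fin m => Z (m - ℓ + i) ω) ∂P)
    - (∫ ω, Km K m (fun i : Fin m => Z i ω) ∂P)
      * (∫ ω, Km K m (fun i : Fin m => Z (m - ℓ + i) ω) ∂P)

/-- Convergence in distribution to a Gaussian, expressed via pointwise convergence of
the cumulative distribution functions (the Gaussian cdf being continuous). -/
def TendstoGaussian {Ω : Type*} [MeasurableSpace Ω] (P : Measure Ω)
    (T : ℕ → Ω → ℝ) (μ : ℝ) (v : ℝ≥0) : Prop :=
  ∀ x : ℝ, Tendsto (fun n => (P {ω | T n ω ≤ x}).toReal) atTop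
    (𝓝 ((gaussianReal μ v (Set.Iic x)).toReal))

/-- Convergence in probability to the constant `c`. -/
def TendstoInProb {Ω : Type*} [MeasurableSpace Ω] (P : Measure Ω)
    (T : ℕ → Ω → ℝ) (c : ℝ) : Prop :=
  ∀ ε : ℝ, 0 < ε → Tendsto (fun n => (P {ω | ε ≤ |T n ω - c|}).toReal) atTop (𝓝 0)


/-- `Z_i` is among the `q` largest of the values `(Z_a)_{a ∈ S}` (for `i ∈ S`):
fewer than `q` members of `S` are strictly larger. -/
def inTopQ (q : ℕ) {Ω : Type*} (Z : ℕ → Ω → ℝ) (S : Finset ℕ) (i : ℕ) (ω : Ω) : Prop :=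
  (S.filter fun a => Z i ω < Z a ω).card < q

/-- The counting variable `N_{ℓ,m}`: the number of `i ∈ [(m-ℓ+1):m]` such that `Z_i` is
in the top-`q` of `Z_{[1:m]}` or of `Z_{[(m-ℓ+1):(2m-ℓ)]}`. -/
def Ncount (q : ℕ) {Ω : Type*} (Z : ℕ → Ω → ℝ) (ℓ m : ℕ) (ω : Ω) : ℕ :=
  ((Finset.Icc (m - ℓ + 1) m).filter fun i =>
    inTopQ q Z (Finset.Icc 1 m) i ω ∨
      inTopQ q Z (Finset.Icc (m - ℓ + 1) (2 * m - ℓ)) i ω).card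

/-- The kernel `K_{|S|}` applied to the subsample `(Z_a)_{a ∈ S}`. -/
def KmOn {q : ℕ} (K : (Fin q → ℝ) → ℝ) {Ω : Type*} (Z : ℕ → Ω → ℝ)
    (S : Finset ℕ) (ω : Ω) : ℝ :=
  Km K S.card fun j => Z (S.orderIsoOfFin rfl j).1 ω

/-- `Ξ_{ℓ,m} = K_m(Z_{[1:m]}) K_m(Z_{[(m-ℓ+1):(2m-ℓ)]})`. -/
def XiRV {q : ℕ} (K : (Fin q → ℝ) → ℝ) {Ω : Type*} (Z : ℕ → Ω → ℝ)
    (ℓ m : ℕ) (ω : Ω) : ℝ :=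
  KmOn K Z (Finset.Icc 1 m) ω * KmOn K Z (Finset.Icc (m - ℓ + 1) (2 * m - ℓ)) ω


def phiG (γ u : ℝ) : ℝ := hGamma γ u⁻¹

lemma measurable_phiG (γ : ℝ) : Measurable (phiG γ) :=
  (measurable_hGamma γ).comp measurable_inv

lemma pareto1_eq : pareto1 = unif01.map (fun u => u⁻¹) := by
  ext E hE
  rw [Measure.map_apply measurable_inv hE, pareto1, paretoMeasure, withDensity_apply _ hE,
    unif01, Measure.restrict_apply (measurable_inv hE)]
  have himg : (fun x : ℝ => x⁻¹) '' (E ∩ Ioi 1) = (fun u => u⁻¹) ⁻¹' E ∩ Ioo (0:ℝ) 1 := by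
    ext y
    constructor
    · rintro ⟨x, ⟨hx, hx1⟩, rfl⟩
      have hx1 : (1:ℝ) < x := hx1
      refine ⟨by simpa using hx, by simp; linarith, by simpa using inv_lt_one_of_one_lt₀ hx1⟩
    · rintro ⟨hy, hy0, hy1⟩
      exact ⟨y⁻¹, ⟨hy, (one_lt_inv₀ hy0).2 hy1⟩, by simp⟩
  rw [← himg]
  have h := lintegral_image_eq_lintegral_abs_deriv_mul (s := E ∩ Ioi (1:ℝ))
    (f := fun x : ℝ => x⁻¹) (f' := fun x => -(x ^ 2)⁻¹) (hE.inter measurableSet_Ioi)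
    (fun x hx => (hasDerivAt_inv (by have : (1:ℝ) < x := hx.2; linarith)).hasDerivWithinAt)
    (inv_injective.injOn) (fun _ => 1)
  simp only [lintegral_const, MeasurableSet.univ, Measure.restrict_apply, Set.univ_inter, one_mul,
    mul_one] at h
  rw [h]
  have h2 : ∫⁻ a in E, paretoPDF 1 1 a = ∫⁻ a in E ∩ Ioi 1, paretoPDF 1 1 a := by
    have : (E ∩ Ici 1 : Set ℝ) =ᵐ[volume] (E ∩ Ioi 1 : Set ℝ) :=
      (ae_eq_refl E).inter Ioi_ae_eq_Ici.symm
    rw [← setLIntegral_congr this, Set.inter_comm, ← Measure.restrict_restrict measurableSet_Ici,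
      ← lintegral_indicator measurableSet_Ici]
    refine lintegral_congr fun x => ?_
    by_cases hx : x ∈ Ici (1:ℝ)
    · simp [hx]
    · rw [Set.indicator_of_notMem hx, paretoPDF_of_lt (by simpa using hx)]
  rw [h2]
  refine setLIntegral_congr_fun (hE.inter measurableSet_Ioi) fun x hx => ?_
  have hx1 : (1:ℝ) < x := hx.2
  have hx0 : (0:ℝ) < x := by linarith
  rw [paretoPDF_of_le hx1.le, abs_neg, abs_of_nonneg (by positivity)]
  congr 1
  rw [Real.rpow_neg hx0.le]
  norm_num

lemma gpMeasure_eq (γ : ℝ) : gpMeasure γ = unif01.map (phiG γ) := by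
  rw [gpMeasure, pareto1_eq, Measure.map_map (measurable_hGamma γ) measurable_inv]
  rfl

def upi (ι : Type*) [Fintype ι] : Measure (ι → ℝ) := Measure.pi fun _ => unif01

instance (ι : Type*) [Fintype ι] : IsProbabilityMeasure (upi ι) := by
  unfold upi; infer_instance

lemma measurable_phiComp (γ : ℝ) {ι : Type*} :
    Measurable (fun (u : ι → ℝ) i => phiG γ (u i)) := by
  have := measurable_phiG γ
  fun_prop

lemma gpPi_eq (γ : ℝ) (n : ℕ) :
    gpPi γ n = (upi (Fin n)).map (fun u i => phiG γ (u i)) := by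
  unfold gpPi upi
  rw [gpMeasure_eq]
  exact (Measure.pi_map_pi (fun i => (measurable_phiG γ).aemeasurable)).symm

lemma upi_eq (ι : Type*) [Fintype ι] :
    upi ι = volume.restrict (Set.univ.pi fun _ => Ioo (0:ℝ) 1) := by
  unfold upi unif01
  rw [← Measure.restrict_pi_pi]; rfl

lemma upi_mem (ι : Type*) [Fintype ι] : ∀ᵐ u ∂(upi ι), ∀ i, u i ∈ Ioo (0:ℝ) 1 := by
  rw [upi_eq]
  filter_upwards [ae_restrict_mem (MeasurableSet.univ_pi fun _ => measurableSet_Ioo)] with u hu i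
  exact hu i (Set.mem_univ i)

lemma upi_inj (ι : Type*) [Fintype ι] : ∀ᵐ u ∂(upi ι), Function.Injective u := by
  have h : ∀ p : ι × ι, p.1 ≠ p.2 → ∀ᵐ u ∂(upi ι), u p.1 ≠ u p.2 := by
    rintro ⟨i, j⟩ hij
    rw [upi_eq]
    refine ae_restrict_of_ae ?_
    let S : Submodule ℝ (ι → ℝ) :=
      LinearMap.ker ((LinearMap.proj i : (ι → ℝ) →ₗ[ℝ] ℝ) - LinearMap.proj j)
    have hS : S ≠ ⊤ := by
      intro hS
      have : (Pi.single i 1 : ι → ℝ) ∈ S := by rw [hS]; trivial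
      simp only [S, LinearMap.mem_ker, LinearMap.sub_apply, LinearMap.proj_apply] at this
      simp [hij.symm] at this
    have := Measure.addHaar_submodule (volume : Measure (ι → ℝ)) S hS
    rw [ae_iff]
    convert this using 2
    ext u
    simp [S, sub_eq_zero]
  have h' : ∀ᵐ u ∂(upi ι), ∀ p : ι × ι, p.1 ≠ p.2 → u p.1 ≠ u p.2 := by
    rw [ae_all_iff]
    intro p
    by_cases hp : p.1 ≠ p.2
    · filter_upwards [h p hp] with u hu _ using hu
    · filter_upwards with u h using absurd h hp
  filter_upwards [h'] with u hu i j hij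
  by_contra hne
  exact hu (i, j) hne hij

lemma upi_reindex {ι κ : Type*} [Fintype ι] [Fintype κ] (e : κ ≃ ι) :
    (upi ι).map (fun u k => u (e k)) = upi κ := by
  unfold upi
  have h := (measurePreserving_piCongrLeft (α := fun _ : κ => ℝ) (fun _ : κ => unif01) e.symm).map_eq
  convert h using 2
  funext u k
  have := Equiv.piCongrLeft_apply_apply (fun _ : κ => ℝ) e.symm u (e k)
  rw [MeasurableEquiv.coe_piCongrLeft]
  simpa using this.symm

open scoped Pointwise in
lemma upi_scale (κ : Type*) [Fintype κ] (c : ℝ) (hc : 0 < c) (hc1 : c ≤ 1) (S : Set (κ → ℝ)) 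
    (hS : MeasurableSet S) :
    upi κ {v | (∀ a, v a < c) ∧ (fun a => v a / c) ∈ S} = upi κ {v | ∀ a, v a < c} * upi κ S := by
  have key : ∀ S : Set (κ → ℝ), MeasurableSet S →
      upi κ {v | (∀ a, v a < c) ∧ (fun a => v a / c) ∈ S}
        = ENNReal.ofReal (c ^ Fintype.card κ) * upi κ S := by
    intro S hS
    have hm : MeasurableSet {v : κ → ℝ | (∀ a, v a < c) ∧ (fun a => v a / c) ∈ S} := by
      refine MeasurableSet.inter ?_ ?_
      · show MeasurableSet {v : κ → ℝ | ∀ a, v a < c}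
        rw [Set.ofPred_forall]
        exact MeasurableSet.iInter fun a => measurableSet_lt (measurable_pi_apply a) measurable_const
      · exact (show Measurable fun (v : κ → ℝ) a => v a / c by fun_prop) hS
    rw [upi_eq, Measure.restrict_apply hm, Measure.restrict_apply hS]
    have : {v : κ → ℝ | (∀ a, v a < c) ∧ (fun a => v a / c) ∈ S} ∩ (Set.univ.pi fun _ => Ioo (0:ℝ) 1)
        = c • (S ∩ (Set.univ.pi fun _ => Ioo (0:ℝ) 1)) := by
      ext v
      rw [Set.mem_smul_set_iff_inv_smul_mem₀ hc.ne']
      have e1 : (c⁻¹ • v) = fun a => v a / c := by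
        ext a; simp [div_eq_inv_mul]
      rw [e1]
      simp only [Set.mem_inter_iff, Set.mem_ofPred_eq, Set.mem_univ_pi, Set.mem_Ioo]
      constructor
      · rintro ⟨⟨h1, h2⟩, h3⟩
        exact ⟨h2, fun i => ⟨div_pos (h3 i).1 hc, (div_lt_one hc).2 (h1 i)⟩⟩
      · rintro ⟨h2, h3⟩
        have h4 : ∀ i, v i < c := fun i => (div_lt_one hc).1 (h3 i).2
        exact ⟨⟨h4, h2⟩, fun i => ⟨(div_pos_iff_of_pos_right hc).1 (h3 i).1, (h4 i).trans_le hc1⟩⟩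
    rw [this, Measure.addHaar_smul]
    simp [abs_of_pos hc]
  rw [key S hS]
  congr 1
  have := key Set.univ MeasurableSet.univ
  simpa using this.symm


lemma le_descStat_iff {m : ℕ} (x : Fin m → ℝ) {k : ℕ} (hk : k < m) (t : ℝ) :
    t ≤ descStat x k ↔ k < (Finset.univ.filter fun a => t ≤ x a).card := by
  unfold descStat
  rw [dif_pos hk]
  have hmono := Tuple.monotone_sort x
  set y := x ∘ Tuple.sort x with hy
  have hcard : (Finset.univ.filter fun a => t ≤ x a).card
      = (Finset.univ.filter fun a => t ≤ y a).card := by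
    symm
    apply Finset.card_equiv (Tuple.sort x)
    intro i
    simp [hy]
  rw [hcard]
  constructor
  · intro h
    have hsub : Finset.Ici (⟨m - 1 - k, by omega⟩ : Fin m) ⊆ Finset.univ.filter fun a => t ≤ y a := by
      intro a ha
      simp only [Finset.mem_Ici] at ha
      simp only [Finset.mem_filter, Finset.mem_univ, true_and]
      exact h.trans (hmono ha)
    have := Finset.card_le_card hsub
    rw [Fin.card_Ici] at this
    simp only at this
    omega
  · intro h
    by_contra hlt
    push Not at hlt
    have hsub : (Finset.univ.filter fun a => t ≤ y a) ⊆ Finset.Ioi (⟨m - 1 - k, by omega⟩ : Fin m) := by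
      intro a ha
      simp only [Finset.mem_filter, Finset.mem_univ, true_and] at ha
      simp only [Finset.mem_Ioi]
      by_contra hle
      push Not at hle
      exact absurd (ha.trans (hmono hle)) (not_le.2 hlt)
    have := Finset.card_le_card hsub
    rw [Fin.card_Ioi] at this
    simp only at this
    omega

lemma descStat_of_not_lt {m : ℕ} (x : Fin m → ℝ) {k : ℕ} (hk : ¬ k < m) : descStat x k = 0 := by
  unfold descStat
  rw [dif_neg hk]

lemma eq_of_forall_le_iff' {a b : ℝ} (h : ∀ t, t ≤ a ↔ t ≤ b) : a = b :=
  le_antisymm ((h a).1 le_rfl) ((h b).2 le_rfl)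

lemma measurable_card_filter {α ι : Type*} [MeasurableSpace α] [Fintype ι] (p : ι → α → Prop)
    (hp : ∀ i, MeasurableSet {x | p i x}) :
    Measurable fun x => (Finset.univ.filter fun i => p i x).card := by
  simp only [Finset.card_filter]
  refine Finset.measurable_fun_sum _ fun i _ => ?_
  exact Measurable.ite (hp i) measurable_const measurable_const

lemma measurable_descStat {m : ℕ} (k : ℕ) : Measurable fun x : Fin m → ℝ => descStat x k := by
  by_cases hk : k < m
  · refine measurable_of_Ici fun t => ?_
    have : (fun x : Fin m → ℝ => descStat x k) ⁻¹' Ici t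
        = {x | k < (Finset.univ.filter fun a => t ≤ x a).card} := by
      ext x
      exact le_descStat_iff x hk t
    rw [this]
    exact measurableSet_lt measurable_const (measurable_card_filter _ fun i =>
      measurableSet_le measurable_const (measurable_pi_apply i))
  · simp only [descStat_of_not_lt _ hk]
    exact measurable_const

lemma measurable_Km {q : ℕ} {K : (Fin q → ℝ) → ℝ} (hK : Measurable K) (m : ℕ) :
    Measurable (Km K m) := by
  unfold Km
  exact hK.comp (measurable_pi_lambda _ fun j => measurable_descStat _)

lemma measurable_Kref {q : ℕ} {K : (Fin q → ℝ) → ℝ} (hK : Measurable K) :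
    Measurable (fun z : Fin (q-1) → ℝ => K (refVec z)) := by
  unfold refVec
  exact hK.comp (measurable_pi_lambda _ fun j => measurable_descStat _)

lemma hGamma_mul (γ : ℝ) {x y : ℝ} (hx : 0 < x) (hy : 0 < y) :
    hGamma γ (x * y) = y ^ γ * hGamma γ x + hGamma γ y := by
  unfold hGamma
  split_ifs with h
  · subst h
    rw [Real.log_mul hx.ne' hy.ne']; simp
  · rw [Real.mul_rpow hx.le hy.le]
    field_simp
    ring

lemma hGamma_lt (γ : ℝ) {x y : ℝ} (hx : 0 < x) (hxy : x < y) : hGamma γ x < hGamma γ y := by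
  unfold hGamma
  split_ifs with h
  · exact Real.log_lt_log hx hxy
  · rcases lt_or_gt_of_ne h with h | h
    · rw [div_lt_div_right_of_neg h]
      have := Real.rpow_lt_rpow_of_neg hx hxy h
      linarith
    · rw [div_lt_div_iff_of_pos_right h]
      have := Real.rpow_lt_rpow hx.le hxy h
      linarith

lemma phiG_lt_iff (γ : ℝ) {u v : ℝ} (hu : 0 < u) (hv : 0 < v) : phiG γ u < phiG γ v ↔ v < u := by
  have key : ∀ {u v : ℝ}, 0 < u → 0 < v → v < u → phiG γ u < phiG γ v := by
    intro u v hu hv h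
    exact hGamma_lt γ (inv_pos.2 hu) (inv_strictAnti₀ hv h)
  constructor
  · intro h
    by_contra hle
    push Not at hle
    rcases hle.eq_or_lt with h1 | h1
    · subst h1; exact lt_irrefl _ h
    · exact absurd (key hv hu h1) (not_lt.2 h.le)
  · exact key hu hv

lemma phiG_le_iff (γ : ℝ) {u v : ℝ} (hu : 0 < u) (hv : 0 < v) : phiG γ u ≤ phiG γ v ↔ v ≤ u := by
  rw [← not_lt, phiG_lt_iff γ hv hu, not_lt]

/-- decomposition event -/
lemma Km_on_event {q n : ℕ} (hq : 1 ≤ q) (hn : q ≤ n) {γ : ℝ} {K : (Fin q → ℝ) → ℝ}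
    (hLS : LocScaleInvariant K) (u : Fin n → ℝ)
    (hu : ∀ i, 0 < u i) (j : Fin n) (I : Finset (Fin n)) (e : Fin (q-1) ≃ I)
    (hI : (Finset.univ.filter fun a => u a < u j) = I) :
    Km K n (fun i => phiG γ (u i)) = K (refVec fun i => phiG γ (u (e i) / u j)) := by
  have hcI : I.card = q - 1 := by
    have := Fintype.card_congr e
    simpa using this.symm
  have ha : 0 < (u j)⁻¹ ^ γ := Real.rpow_pos_of_pos (inv_pos.2 (hu j)) γ
  have hmemI : ∀ a, a ∈ I ↔ u a < u j := by intro a; rw [← hI]; simp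
  have hphi : ∀ a, phiG γ (u a) = (u j)⁻¹ ^ γ * phiG γ (u a / u j) + phiG γ (u j) := by
    intro a
    unfold phiG
    rw [← hGamma_mul γ (inv_pos.2 (div_pos (hu a) (hu j))) (inv_pos.2 (hu j))]
    congr 1
    have := (hu j).ne'
    have := (hu a).ne'
    field_simp
  rw [← hLS ((u j)⁻¹ ^ γ) (phiG γ (u j)) ha]
  unfold Km
  congr 1
  funext k
  have hk := k.2
  apply eq_of_forall_le_iff'
  intro t
  rw [le_descStat_iff _ (by omega)]
  by_cases hkq : (k : ℕ) < q - 1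
  · unfold refVec
    have h1 : t ≤ (u j)⁻¹ ^ γ * descStat (fun i => phiG γ (u (e i) / u j)) k + phiG γ (u j)
        ↔ (t - phiG γ (u j)) / (u j)⁻¹ ^ γ ≤ descStat (fun i => phiG γ (u (e i) / u j)) k := by
      rw [div_le_iff₀ ha, mul_comm]
      constructor <;> intro h <;> linarith
    rw [h1, le_descStat_iff _ hkq]
    have h2 : (Finset.univ.filter fun i =>
        (t - phiG γ (u j)) / (u j)⁻¹ ^ γ ≤ phiG γ (u (e i) / u j)).card
        = (I.filter fun a => t ≤ phiG γ (u a)).card := by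
      refine Finset.card_bij (fun i _ => (e i : Fin n)) ?_ ?_ ?_
      · intro i hi
        simp only [Finset.mem_filter, Finset.mem_univ, true_and] at hi ⊢
        refine ⟨(e i).2, ?_⟩
        rw [hphi]
        rw [div_le_iff₀ ha] at hi
        linarith
      · intro a _ b _ hab
        exact e.injective (Subtype.ext hab)
      · intro b hb
        simp only [Finset.mem_filter] at hb
        refine ⟨e.symm ⟨b, hb.1⟩, ?_, by simp⟩
        simp only [Finset.mem_filter, Finset.mem_univ, true_and, Equiv.apply_symm_apply]
        have := hb.2
        rw [hphi] at this
        rw [div_le_iff₀ ha]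
        linarith
    rw [h2]
    by_cases ht : t ≤ phiG γ (u j)
    · have h3 : (I.filter fun a => t ≤ phiG γ (u a)) = I := by
        rw [Finset.filter_eq_self]
        intro a haI
        exact ht.trans ((phiG_lt_iff γ (hu j) (hu a)).2 ((hmemI a).1 haI)).le
      rw [h3]
      have h4 : I ⊆ (Finset.univ.filter fun a => t ≤ phiG γ (u a)) := by
        rw [← h3]
        exact Finset.filter_subset_filter _ (Finset.subset_univ _)
      have := Finset.card_le_card h4
      omega
    · have h3 : (Finset.univ.filter fun a => t ≤ phiG γ (u a)) = I.filter fun a => t ≤ phiG γ (u a) := by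
        ext a
        simp only [Finset.mem_filter, Finset.mem_univ, true_and]
        refine ⟨fun h => ⟨?_, h⟩, fun h => h.2⟩
        rw [hmemI, ← phiG_lt_iff γ (hu j) (hu a)]
        linarith
      rw [h3]
  · have hkq' : (k : ℕ) = q - 1 := by omega
    unfold refVec
    rw [descStat_of_not_lt _ hkq, mul_zero, zero_add, hkq']
    have hjI : j ∉ I := by rw [hmemI]; exact lt_irrefl _
    constructor
    · intro h
      by_contra ht
      have : (Finset.univ.filter fun a => t ≤ phiG γ (u a)) ⊆ I := by
        intro a haa
        simp only [Finset.mem_filter, Finset.mem_univ, true_and] at haa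
        rw [hmemI, ← phiG_lt_iff γ (hu j) (hu a)]
        linarith
      have := Finset.card_le_card this
      omega
    · intro ht
      have : insert j I ⊆ (Finset.univ.filter fun a => t ≤ phiG γ (u a)) := by
        intro a haa
        simp only [Finset.mem_filter, Finset.mem_univ, true_and]
        rcases Finset.mem_insert.1 haa with rfl | haa
        · exact ht
        · exact ht.trans ((phiG_lt_iff γ (hu j) (hu a)).2 ((hmemI a).1 haa)).le
      have := Finset.card_le_card this
      rw [Finset.card_insert_of_notMem hjI] at this
      omega

lemma count_on_event {q n : ℕ} (hq : 1 ≤ q) {γ : ℝ} (u : Fin n → ℝ)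
    (hu : ∀ i, 0 < u i) (j : Fin n) (I : Finset (Fin n)) (hcI : I.card = q - 1)
    (hI : (Finset.univ.filter fun a => u a < u j) = I) (M : ℝ) :
    q ≤ (Finset.univ.filter fun a => M < phiG γ (u a)).card ↔ M < phiG γ (u j) := by
  have hmemI : ∀ a, a ∈ I ↔ u a < u j := by intro a; rw [← hI]; simp
  have hjI : j ∉ I := by rw [hmemI]; exact lt_irrefl _
  constructor
  · intro h
    by_contra ht
    have : (Finset.univ.filter fun a => M < phiG γ (u a)) ⊆ I := by
      intro a haa
      simp only [Finset.mem_filter, Finset.mem_univ, true_and] at haa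
      rw [hmemI, ← phiG_lt_iff γ (hu j) (hu a)]
      linarith
    have := Finset.card_le_card this
    omega
  · intro ht
    have : insert j I ⊆ (Finset.univ.filter fun a => M < phiG γ (u a)) := by
      intro a haa
      simp only [Finset.mem_filter, Finset.mem_univ, true_and]
      rcases Finset.mem_insert.1 haa with rfl | haa
      · exact ht
      · exact ht.trans ((phiG_lt_iff γ (hu j) (hu a)).2 ((hmemI a).1 haa))
    have := Finset.card_le_card this
    rw [Finset.card_insert_of_notMem hjI] at this
    omega

lemma exists_unique_rank {n : ℕ} (u : Fin n → ℝ) (hu : Function.Injective u) (k : ℕ) (hk : k < n) :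
    ∃! j : Fin n, (Finset.univ.filter fun a => u a < u j).card = k := by
  let r : Fin n → Fin n := fun j => ⟨(Finset.univ.filter fun a => u a < u j).card, by
    have : (Finset.univ.filter fun a => u a < u j) ⊂ Finset.univ := by
      rw [Finset.filter_ssubset]
      exact ⟨j, Finset.mem_univ _, lt_irrefl _⟩
    simpa using Finset.card_lt_card this⟩
  have hlt : ∀ i j, u i < u j → r i < r j := by
    intro i j hij
    rw [Fin.lt_def]
    change (Finset.univ.filter fun a => u a < u i).card < (Finset.univ.filter fun a => u a < u j).card
    apply Finset.card_lt_card
    rw [Finset.ssubset_iff_of_subset]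
    · exact ⟨i, by simpa using hij, by simp⟩
    · intro a ha
      simp only [Finset.mem_filter, Finset.mem_univ, true_and] at ha ⊢
      exact ha.trans hij
  have hinj : Function.Injective r := by
    intro i j hij
    by_contra hne
    rcases lt_or_gt_of_ne (fun h => hne (hu h)) with h | h
    · exact (hlt _ _ h).ne hij
    · exact (hlt _ _ h).ne' hij
  obtain ⟨j, hj⟩ := (Finite.injective_iff_surjective.1 hinj) ⟨k, hk⟩
  refine ⟨j, congrArg Fin.val hj, fun i hi => hinj ?_⟩
  rw [hj]
  exact Fin.ext hi


lemma measurableSet_filter_eq {n : ℕ} (j : Fin n) (I : Finset (Fin n)) :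
    MeasurableSet {u : Fin n → ℝ | (Finset.univ.filter fun a => u a < u j) = I} := by
  have : {u : Fin n → ℝ | (Finset.univ.filter fun a => u a < u j) = I}
      = ⋂ a, {u : Fin n → ℝ | u a < u j ↔ a ∈ I} := by
    ext u
    simp [Finset.ext_iff]
  rw [this]
  refine MeasurableSet.iInter fun a => ?_
  exact (measurableSet_lt (measurable_pi_apply a) (measurable_pi_apply j)).iff
    (MeasurableSet.const _)

lemma piece_gen {n : ℕ} (γ : ℝ) (j : Fin n) (I : Finset (Fin n)) (M : ℝ)
    (S : Set (I → ℝ)) (hS : MeasurableSet S) :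
    upi (Fin n) {u | ((Finset.univ.filter fun a => u a < u j) = I) ∧ M < phiG γ (u j) ∧
        (fun a : I => u a / u j) ∈ S}
      = upi (Fin n) {u | ((Finset.univ.filter fun a => u a < u j) = I) ∧ M < phiG γ (u j)}
        * upi I S := by
  by_cases hj : j ∈ I
  · have h0 : ∀ u : Fin n → ℝ, ¬ ((Finset.univ.filter fun a => u a < u j) = I) := by
      intro u h
      rw [← h] at hj
      simp at hj
    simp [h0]
  let j' : {i // i ∉ I} := ⟨j, hj⟩
  let W : Set (I → ℝ) → Set ((I → ℝ) × ({i // i ∉ I} → ℝ)) := fun S =>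
    {x | (∀ a, x.1 a < x.2 j') ∧ (∀ a, x.2 j' ≤ x.2 a) ∧ M < phiG γ (x.2 j') ∧
      (fun a => x.1 a / x.2 j') ∈ S}
  obtain ⟨ν, hνp, hνm, hmp⟩ : ∃ ν : Measure ({i // i ∉ I} → ℝ), IsProbabilityMeasure ν ∧
      (∀ᵐ w ∂ν, ∀ i, w i ∈ Ioo (0:ℝ) 1) ∧
      MeasurePreserving (MeasurableEquiv.piEquivPiSubtypeProd (fun _ : Fin n => ℝ)
      (fun i => i ∈ I)) (upi (Fin n)) ((upi I).prod ν) := by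
    refine ⟨upi {i // i ∉ I}, inferInstance, upi_mem _, ?_⟩
    have h := measurePreserving_piEquivPiSubtypeProd (α := fun _ : Fin n => ℝ)
      (fun _ => unif01) (fun i => i ∈ I)
    unfold upi
    convert h
  have hphi := measurable_phiG γ
  have hW : ∀ S, MeasurableSet S → MeasurableSet (W S) := by
    intro S hS
    refine MeasurableSet.inter ?_ (MeasurableSet.inter ?_ (MeasurableSet.inter ?_ ?_))
    · change MeasurableSet {x : (I → ℝ) × ({i // i ∉ I} → ℝ) | ∀ a, x.1 a < x.2 j'}
      rw [Set.ofPred_forall]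
      exact MeasurableSet.iInter fun a => measurableSet_lt (by fun_prop) (by fun_prop)
    · change MeasurableSet {x : (I → ℝ) × ({i // i ∉ I} → ℝ) | ∀ a, x.2 j' ≤ x.2 a}
      rw [Set.ofPred_forall]
      exact MeasurableSet.iInter fun a => measurableSet_le (by fun_prop) (by fun_prop)
    · exact measurableSet_lt (f := fun _ => M) (g := fun x : (I → ℝ) × ({i // i ∉ I} → ℝ) => phiG γ (x.2 j')) measurable_const
        (by fun_prop)
    · exact (show Measurable fun (x : (I → ℝ) × ({i // i ∉ I} → ℝ)) (a : I) => x.1 a / x.2 j' by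
        fun_prop) hS
  have hA : ∀ S, MeasurableSet S → upi (Fin n) {u | ((Finset.univ.filter fun a => u a < u j) = I) ∧
      M < phiG γ (u j) ∧ (fun a : I => u a / u j) ∈ S} = ((upi I).prod ν) (W S) := by
    intro S hS
    have := hmp.measure_preimage (hW S hS).nullMeasurableSet
    refine Eq.trans ?_ this
    congr 1
    ext u
    simp only [Set.mem_preimage, W, Set.mem_ofPred_eq, Finset.ext_iff, Finset.mem_filter,
      Finset.mem_univ, true_and]
    constructor
    · rintro ⟨h1, h2, h3⟩
      refine ⟨fun a => (h1 a).2 a.2, fun a => ?_, h2, h3⟩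
      have := (not_congr (h1 a)).2 a.2
      exact not_lt.1 this
    · rintro ⟨h1, h2, h3, h4⟩
      refine ⟨fun a => ⟨fun h => ?_, fun h => h1 ⟨a, h⟩⟩, h3, h4⟩
      by_contra ha
      exact absurd h (not_lt.2 (h2 ⟨a, ha⟩))
  have hB := hA Set.univ MeasurableSet.univ
  simp only [Set.mem_univ, and_true] at hB
  have hsf : SigmaFinite ν := IsFiniteMeasure.toSigmaFinite ν
  have hsf : SFinite ν := inferInstance
  rw [hA S hS, hB, Measure.prod_apply_symm (μ := upi I) (ν := ν) (hW S hS),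
    Measure.prod_apply_symm (μ := upi I) (ν := ν) (hW _ MeasurableSet.univ), ← lintegral_mul_const _
      (measurable_measure_prodMk_right (μ := upi I) (hW _ MeasurableSet.univ))]
  refine lintegral_congr_ae ?_
  filter_upwards [hνm] with w hw
  by_cases hc : (∀ a, w j' ≤ w a) ∧ M < phiG γ (w j')
  · have := upi_scale I (w j') (hw j').1 (hw j').2.le S hS
    convert this using 2
    · ext v; simp [W, hc.1, hc.2]
    · congr 1; ext v; simp [W, hc.1, hc.2]
  · have h0 : ∀ S, (fun x => (x, w)) ⁻¹' (W S) = ∅ := by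
      intro S
      ext v
      simp only [W, Set.mem_preimage, Set.mem_ofPred_eq, Set.mem_empty_iff_false, iff_false]
      tauto
    rw [h0, h0]; simp

lemma block_upi {q n : ℕ} (hq : 1 ≤ q) (hn : q ≤ n) (γ : ℝ) {K : (Fin q → ℝ) → ℝ}
    (hK : Measurable K) (hLS : LocScaleInvariant K) (M : ℝ) (s : Set ℝ) (hs : MeasurableSet s) :
    upi (Fin n) {u | q ≤ (Finset.univ.filter fun a => M < phiG γ (u a)).card ∧
        Km K n (fun i => phiG γ (u i)) ∈ s}
      = upi (Fin n) {u | q ≤ (Finset.univ.filter fun a => M < phiG γ (u a)).card} *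
        upi (Fin (q-1)) {v | K (refVec fun i => phiG γ (v i)) ∈ s} := by
  have hphi := measurable_phiG γ
  let X : Set ℝ → Set (Fin n → ℝ) := fun s =>
    {u | q ≤ (Finset.univ.filter fun a => M < phiG γ (u a)).card ∧
        Km K n (fun i => phiG γ (u i)) ∈ s}
  have hX : ∀ s, MeasurableSet s → MeasurableSet (X s) := by
    intro s hs
    refine MeasurableSet.inter ?_ ?_
    · exact measurableSet_le measurable_const (measurable_card_filter _ fun i =>
        measurableSet_lt measurable_const (by fun_prop))
    · exact ((measurable_Km hK n).comp (measurable_phiComp γ)) hs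
  let E : Fin n × Finset (Fin n) → Set (Fin n → ℝ) := fun p =>
    {u | (Finset.univ.filter fun a => u a < u p.1) = p.2}
  have hE : ∀ p, MeasurableSet (E p) := fun p => measurableSet_filter_eq p.1 p.2
  let T : Finset (Fin n × Finset (Fin n)) := Finset.univ.filter fun p => p.2.card = q - 1
  have hsum : ∀ s, MeasurableSet s → upi (Fin n) (X s) = ∑ p ∈ T, upi (Fin n) (X s ∩ E p) := by
    intro s hs
    have h1 : ∀ p ∈ T, upi (Fin n) (X s ∩ E p)
        = ∫⁻ u, (X s ∩ E p).indicator 1 u ∂(upi (Fin n)) := fun p _ =>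
      (lintegral_indicator_one ((hX s hs).inter (hE p))).symm
    rw [Finset.sum_congr rfl h1, ← lintegral_finsetSum _ (fun p _ =>
      measurable_one.indicator ((hX s hs).inter (hE p))), ← lintegral_indicator_one (hX s hs)]
    refine lintegral_congr_ae ?_
    filter_upwards [upi_inj (Fin n)] with u hu
    obtain ⟨j, hj, hj'⟩ := exists_unique_rank u hu (q-1) (by omega)
    rw [Finset.sum_eq_single (j, Finset.univ.filter fun a => u a < u j)]
    · simp [Set.indicator_apply, E]
    · rintro ⟨i, I⟩ hp hne
      rw [Set.indicator_of_notMem]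
      rintro ⟨_, h2⟩
      have h2 : (Finset.univ.filter fun a => u a < u i) = I := h2
      simp only [T, Finset.mem_filter, Finset.mem_univ, true_and] at hp
      have : i = j := hj' i ((congrArg Finset.card h2).trans hp)
      subst this
      exact hne (by rw [h2])
    · intro h
      exfalso; apply h
      simp only [T, Finset.mem_filter, Finset.mem_univ, true_and]
      exact hj
  have hpiece : ∀ p ∈ T, ∀ s, MeasurableSet s → upi (Fin n) (X s ∩ E p)
      = upi (Fin n) {u | ((Finset.univ.filter fun a => u a < u p.1) = p.2) ∧ M < phiG γ (u p.1)}
        * upi (Fin (q-1)) {v | K (refVec fun i => phiG γ (v i)) ∈ s} := by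
    rintro ⟨j, I⟩ hp s hs
    have hc : I.card = q - 1 := by simpa [T] using hp
    have e : Fin (q-1) ≃ I := (Fintype.equivFinOfCardEq (by simpa using hc)).symm
    let S : Set (I → ℝ) := {v | K (refVec fun i => phiG γ (v (e i))) ∈ s}
    have hm : MeasurableSet {v : Fin (q-1) → ℝ | K (refVec fun i => phiG γ (v i)) ∈ s} :=
      ((measurable_Kref hK).comp (measurable_phiComp γ)) hs
    have hS : MeasurableSet S :=
      (show Measurable fun (v : I → ℝ) i => v (e i) by fun_prop) hm
    have h2 : upi I S = upi (Fin (q-1)) {v | K (refVec fun i => phiG γ (v i)) ∈ s} := by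
      rw [← upi_reindex e, Measure.map_apply (by fun_prop) hm]
      rfl
    rw [← h2, ← piece_gen γ j I M S hS]
    refine measure_congr ?_
    filter_upwards [upi_mem (Fin n)] with u hu
    apply propext
    have hu0 : ∀ i, 0 < u i := fun i => (hu i).1
    constructor
    · rintro ⟨⟨h3, h4⟩, h5⟩
      refine ⟨h5, (count_on_event hq u hu0 j I hc h5 M).1 h3, ?_⟩
      have := Km_on_event (γ := γ) hq hn hLS u hu0 j I e h5
      rw [this] at h4
      exact h4
    · rintro ⟨h5, h3, h4⟩
      refine ⟨⟨(count_on_event hq u hu0 j I hc h5 M).2 h3, ?_⟩, h5⟩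
      have := Km_on_event (γ := γ) hq hn hLS u hu0 j I e h5
      rw [this]
      exact h4
  have hfin : ∀ s, MeasurableSet s → upi (Fin n) (X s) = (∑ p ∈ T,
      upi (Fin n) {u | ((Finset.univ.filter fun a => u a < u p.1) = p.2) ∧ M < phiG γ (u p.1)})
        * upi (Fin (q-1)) {v | K (refVec fun i => phiG γ (v i)) ∈ s} := by
    intro s hs
    rw [hsum s hs, Finset.sum_mul]
    exact Finset.sum_congr rfl fun p hp => hpiece p hp s hs
  have h1 := hfin s hs
  have h2 := hfin Set.univ MeasurableSet.univ
  simp only [Set.mem_univ, X, and_true] at h2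
  have h3 : upi (Fin (q-1)) {v | True} = 1 := by
    rw [show {v : Fin (q-1) → ℝ | True} = Set.univ from rfl]; exact measure_univ
  rw [h3, mul_one] at h2
  rw [h2]
  exact h1

lemma block_gp {q n : ℕ} (hq : 1 ≤ q) (hn : q ≤ n) (γ : ℝ) {K : (Fin q → ℝ) → ℝ}
    (hK : Measurable K) (hLS : LocScaleInvariant K) (M : ℝ) (s : Set ℝ) (hs : MeasurableSet s) :
    gpPi γ n {z | q ≤ (Finset.univ.filter fun a => M < z a).card ∧ Km K n z ∈ s}
      = gpPi γ n {z | q ≤ (Finset.univ.filter fun a => M < z a).card} *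
        gpPi γ (q-1) {z | K (refVec z) ∈ s} := by
  have hm1 : MeasurableSet {z : Fin n → ℝ | q ≤ (Finset.univ.filter fun a => M < z a).card} :=
    measurableSet_le measurable_const (measurable_card_filter _ fun i =>
        measurableSet_lt measurable_const (by fun_prop))
  have hm2 : MeasurableSet {z : Fin n → ℝ | Km K n z ∈ s} := measurable_Km hK n hs
  have hm3 : MeasurableSet {z : Fin (q-1) → ℝ | K (refVec z) ∈ s} := measurable_Kref hK hs
  rw [gpPi_eq, gpPi_eq, Measure.map_apply (measurable_phiComp γ) hm1,
    Measure.map_apply (measurable_phiComp γ) hm3]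
  refine (Measure.map_apply (measurable_phiComp γ) (hm1.inter hm2)).trans ?_
  exact block_upi hq hn γ hK hLS M s hs


lemma top_event_iff (q : ℕ) (z : ℕ → ℝ) (A B : Finset ℕ) :
    (∀ i ∈ B, q ≤ ((A ∪ B).filter fun a => z i < z a).card) ↔
      ∀ i ∈ B, q ≤ (A.filter fun a => z i < z a).card := by
  constructor
  · intro h i hi
    obtain ⟨b, hb, hmax⟩ := Finset.exists_max_image B z ⟨i, hi⟩
    have h1 : ((A ∪ B).filter fun a => z b < z a) ⊆ A.filter fun a => z i < z a := by
      intro a ha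
      simp only [Finset.mem_filter, Finset.mem_union] at ha ⊢
      obtain ⟨ha1 | ha1, ha2⟩ := ha
      · exact ⟨ha1, (hmax i hi).trans_lt ha2⟩
      · exact absurd ha2 (not_lt.2 (hmax a ha1))
    exact (h b hb).trans (Finset.card_le_card h1)
  · intro h i hi
    exact (h i hi).trans (Finset.card_le_card
      (Finset.filter_subset_filter _ Finset.subset_union_left))

lemma card_orderIso (S : Finset ℕ) (p : ℕ → Prop) :
    (Finset.univ.filter fun j : Fin S.card => p (S.orderIsoOfFin rfl j).1).card
      = (S.filter p).card := by
  refine Finset.card_bij (fun j _ => (S.orderIsoOfFin rfl j).1) ?_ ?_ ?_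
  · intro j hj
    simp only [Finset.mem_filter, Finset.mem_univ, true_and] at hj ⊢
    exact ⟨(S.orderIsoOfFin rfl j).2, hj⟩
  · intro a _ b _ h
    exact (S.orderIsoOfFin rfl).injective (Subtype.ext h)
  · intro b hb
    simp only [Finset.mem_filter] at hb
    refine ⟨(S.orderIsoOfFin rfl).symm ⟨b, hb.1⟩, ?_, by simp⟩
    simp only [Finset.mem_filter, Finset.mem_univ, true_and, OrderIso.apply_symm_apply]
    exact hb.2

lemma card_Icc_filter (s k : ℕ) (p : ℕ → Prop) :
    (Finset.univ.filter fun i : Fin k => p (s + 1 + i)).card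
      = ((Finset.Icc (s+1) (s+k)).filter p).card := by
  refine Finset.card_bij (fun j _ => s + 1 + (j : ℕ)) ?_ ?_ ?_
  · intro j hj
    simp only [Finset.mem_filter, Finset.mem_univ, true_and, Finset.mem_Icc] at hj ⊢
    exact ⟨by omega, hj⟩
  · intro a _ b _ h
    exact Fin.ext (by omega)
  · intro b hb
    simp only [Finset.mem_filter, Finset.mem_Icc] at hb
    have hb' : s + 1 + (b - (s+1)) = b := by omega
    refine ⟨⟨b - (s+1), by omega⟩, ?_, hb'⟩
    simp only [Finset.mem_filter, Finset.mem_univ, true_and]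
    rw [hb']; exact hb.2

lemma KmOn_eq {q : ℕ} (K : (Fin q → ℝ) → ℝ) {Ω : Type*} (Z : ℕ → Ω → ℝ) (ω : Ω)
    (s n : ℕ) (hn : q ≤ n) (B S : Finset ℕ) (hS : S = Finset.Icc (s+1) (s+n) ∪ B)
    (h : ∀ i ∈ B, q ≤ ((Finset.Icc (s+1) (s+n)).filter fun a => Z i ω < Z a ω).card) :
    KmOn K Z S ω = Km K n (fun i => Z (s + 1 + i) ω) := by
  unfold KmOn Km
  congr 1
  funext k
  have hk := k.2
  have hcard : n ≤ S.card := by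
    rw [hS]
    refine le_trans ?_ (Finset.card_le_card Finset.subset_union_left)
    simp
  apply eq_of_forall_le_iff'
  intro t
  rw [le_descStat_iff _ (by omega), le_descStat_iff _ (by omega)]
  rw [card_orderIso S (fun a => t ≤ Z a ω), card_Icc_filter s n (fun a => t ≤ Z a ω)]
  by_cases hb : ∃ b ∈ B, t ≤ Z b ω
  · obtain ⟨b, hb, htb⟩ := hb
    have h1 : q ≤ ((Finset.Icc (s+1) (s+n)).filter fun a => t ≤ Z a ω).card := by
      refine (h b hb).trans (Finset.card_le_card ?_)
      intro a ha
      simp only [Finset.mem_filter] at ha ⊢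
      exact ⟨ha.1, htb.trans ha.2.le⟩
    have h2 : ((Finset.Icc (s+1) (s+n)).filter fun a => t ≤ Z a ω).card
        ≤ (S.filter fun a => t ≤ Z a ω).card := by
      rw [hS]
      exact Finset.card_le_card (Finset.filter_subset_filter _ Finset.subset_union_left)
    constructor <;> intro <;> omega
  · push Not at hb
    have : (S.filter fun a => t ≤ Z a ω) = (Finset.Icc (s+1) (s+n)).filter fun a => t ≤ Z a ω := by
      rw [hS, Finset.filter_union, Finset.filter_false_of_mem (s := B), Finset.union_empty]
      intro b hbB
      exact not_le.2 (hb b hbB)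
    rw [this]

/-- the event in block form -/
lemma card_filter_zero_aux (s : Finset ℕ) (p : ℕ → Prop) (inst : DecidablePred p) :
    (@Finset.filter _ p inst s).card = 0 ↔ ∀ i ∈ s, ¬ p i := by
  rw [Finset.card_eq_zero, Finset.filter_eq_empty_iff]

lemma Ncount_zero_iff (q : ℕ) {Ω : Type*} (Z : ℕ → Ω → ℝ) (ℓ n : ℕ) (ω : Ω) :
    Ncount q Z ℓ (n + ℓ) ω = 0 ↔
      (∀ i ∈ Finset.Icc (n+1) (n+ℓ), q ≤ ((Finset.Icc (0+1) (0+n)).filter fun a => Z i ω < Z a ω).card) ∧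
      (∀ i ∈ Finset.Icc (n+1) (n+ℓ),
        q ≤ ((Finset.Icc (n+ℓ+1) (n+ℓ+n)).filter fun a => Z i ω < Z a ω).card) := by
  rw [← top_event_iff q (fun i => Z i ω) (Finset.Icc (0+1) (0+n)), ← top_event_iff q (fun i => Z i ω) (Finset.Icc (n+ℓ+1) (n+ℓ+n))]
  unfold Ncount
  refine (card_filter_zero_aux _ _ _).trans ?_
  unfold inTopQ
  have e1 : n + ℓ - ℓ + 1 = n + 1 := by omega
  have e2 : 2 * (n + ℓ) - ℓ = n + ℓ + n := by omega
  have e3 : Finset.Icc (0+1) (0+n) ∪ Finset.Icc (n+1) (n+ℓ) = Finset.Icc 1 (n+ℓ) := by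
    ext a; simp only [Finset.mem_union, Finset.mem_Icc]; omega
  have e4 : Finset.Icc (n+ℓ+1) (n+ℓ+n) ∪ Finset.Icc (n+1) (n+ℓ) = Finset.Icc (n+1) (n+ℓ+n) := by
    ext a; simp only [Finset.mem_union, Finset.mem_Icc]; omega
  rw [e1, e2, e3, e4, ← forall₂_and]
  refine forall₂_congr fun i _ => ?_
  rw [not_or, not_lt, not_lt]

def evA (q ℓ n : ℕ) (zB : Fin ℓ → ℝ) : Set (Fin n → ℝ) :=
  {z | ∀ b, q ≤ (Finset.univ.filter fun a => zB b < z a).card}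

def blkA {Ω : Type*} (Z : ℕ → Ω → ℝ) (s n : ℕ) (ω : Ω) : Fin n → ℝ := fun i => Z (s + 1 + i) ω

lemma Ncount_zero_iff' (q : ℕ) {Ω : Type*} (Z : ℕ → Ω → ℝ) (ℓ n : ℕ) (ω : Ω) :
    Ncount q Z ℓ (n + ℓ) ω = 0 ↔
      blkA Z 0 n ω ∈ evA q ℓ n (blkA Z n ℓ ω) ∧ blkA Z (n+ℓ) n ω ∈ evA q ℓ n (blkA Z n ℓ ω) := by
  rw [Ncount_zero_iff]
  have key : ∀ p : ℕ → Prop, (∀ i ∈ Finset.Icc (n+1) (n+ℓ), p i) ↔ ∀ b : Fin ℓ, p (n + 1 + b) := by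
    intro p
    constructor
    · intro h b
      exact h _ (by rw [Finset.mem_Icc]; omega)
    · intro h i hi
      rw [Finset.mem_Icc] at hi
      have := h ⟨i - (n+1), by omega⟩
      have e : n + 1 + (i - (n+1)) = i := by omega
      simp only [e] at this
      exact this
  rw [key, key]
  refine and_congr (forall_congr' fun b => ?_) (forall_congr' fun b => ?_)
  · rw [← card_Icc_filter 0 n (fun a => Z (n+1+b) ω < Z a ω)]; rfl
  · rw [← card_Icc_filter (n+ℓ) n (fun a => Z (n+1+b) ω < Z a ω)]; rfl

lemma XiRV_eq {q : ℕ} (K : (Fin q → ℝ) → ℝ) {Ω : Type*} (Z : ℕ → Ω → ℝ) (ℓ n : ℕ) (hn : q ≤ n)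
    (ω : Ω) (h : Ncount q Z ℓ (n + ℓ) ω = 0) :
    XiRV K Z ℓ (n + ℓ) ω = Km K n (blkA Z 0 n ω) * Km K n (blkA Z (n+ℓ) n ω) := by
  rw [Ncount_zero_iff] at h
  unfold XiRV
  have e1 : n + ℓ - ℓ + 1 = n + 1 := by omega
  have e2 : 2 * (n + ℓ) - ℓ = n + ℓ + n := by omega
  rw [e1, e2]
  congr 1
  · refine KmOn_eq K Z ω 0 n hn (Finset.Icc (n+1) (n+ℓ)) _ ?_ h.1
    ext a; simp only [Finset.mem_union, Finset.mem_Icc]; omega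
  · refine KmOn_eq K Z ω (n+ℓ) n hn (Finset.Icc (n+1) (n+ℓ)) _ ?_ h.2
    ext a; simp only [Finset.mem_union, Finset.mem_Icc]; omega

lemma law_blocks {Ω : Type*} [MeasurableSpace Ω] (P : Measure Ω) [IsProbabilityMeasure P]
    (γ : ℝ) (Z : ℕ → Ω → ℝ) (hZmeas : ∀ i, Measurable (Z i)) (hIndep : iIndepFun Z P)
    (hDist : ∀ i, Measure.map (Z i) P = gpMeasure γ) (ℓ n : ℕ) :
    P.map (fun ω => (blkA Z n ℓ ω, blkA Z 0 n ω, blkA Z (n+ℓ) n ω))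
      = (gpPi γ ℓ).prod ((gpPi γ n).prod (gpPi γ n)) := by
  let g : Fin ℓ ⊕ (Fin n ⊕ Fin n) → ℕ :=
    Sum.elim (fun b => n + 1 + b) (Sum.elim (fun a => 0 + 1 + a) (fun c => n + ℓ + 1 + c))
  have hg : Function.Injective g := by
    rintro (a | a | a) (b | b | b) h <;> simp only [g, Sum.elim_inl, Sum.elim_inr] at h <;>
      first
      | (congr; exact Fin.ext (by omega))
      | (exfalso; omega)
  have h1 := hIndep.precomp hg
  have h2 := (iIndepFun_iff_map_fun_eq_pi_map (fun i => (hZmeas (g i)).aemeasurable)).1 h1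
  have h2' : P.map (fun ω i => Z (g i) ω) = Measure.pi fun _ => gpMeasure γ := by
    refine Eq.trans h2 ?_
    congr 1
    funext i
    exact hDist (g i)
  have m1 := measurePreserving_sumPiEquivProdPi (X := fun _ : Fin ℓ ⊕ (Fin n ⊕ Fin n) => ℝ)
    (fun _ => gpMeasure γ)
  have m2 := measurePreserving_sumPiEquivProdPi (X := fun _ : (Fin n ⊕ Fin n) => ℝ)
    (fun _ => gpMeasure γ)
  have m3 := ((MeasurePreserving.id (gpPi γ ℓ)).prod m2).comp m1
  have m4 : MeasurePreserving (fun ω i => Z (g i) ω) P (Measure.pi fun _ => gpMeasure γ) :=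
    ⟨measurable_pi_lambda _ fun i => hZmeas _, h2'⟩
  exact (m3.comp m4).map_eq

lemma measurable_blkA {Ω : Type*} [MeasurableSpace Ω] (Z : ℕ → Ω → ℝ)
    (hZmeas : ∀ i, Measurable (Z i)) (s n : ℕ) : Measurable (blkA Z s n) :=
  measurable_pi_lambda _ fun _ => hZmeas _

lemma evA_eq (q ℓ n : ℕ) (hℓ : 1 ≤ ℓ) (zB : Fin ℓ → ℝ) : ∃ b, (∀ b', zB b' ≤ zB b) ∧
    evA q ℓ n zB = {z | q ≤ (Finset.univ.filter fun a => zB b < z a).card} := by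
  obtain ⟨b, _, hb⟩ := Finset.exists_max_image (Finset.univ : Finset (Fin ℓ)) zB
    ⟨⟨0, by omega⟩, Finset.mem_univ _⟩
  refine ⟨b, fun b' => hb b' (Finset.mem_univ _), ?_⟩
  ext z
  constructor
  · intro h; exact h b
  · intro h b'
    refine le_trans h (Finset.card_le_card ?_)
    intro a ha
    simp only [Finset.mem_filter, Finset.mem_univ, true_and] at ha ⊢
    exact (hb b' (Finset.mem_univ _)).trans_lt ha

lemma measurableSet_evA2 (q ℓ n : ℕ) :
    MeasurableSet {x : (Fin ℓ → ℝ) × (Fin n → ℝ) | x.2 ∈ evA q ℓ n x.1} := by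
  change MeasurableSet {x : (Fin ℓ → ℝ) × (Fin n → ℝ) | ∀ b,
    q ≤ (Finset.univ.filter fun a => x.1 b < x.2 a).card}
  rw [Set.ofPred_forall]
  refine MeasurableSet.iInter fun b => ?_
  exact measurableSet_le measurable_const (measurable_card_filter _ fun i =>
        measurableSet_lt (by fun_prop) (by fun_prop))

lemma prob_main {Ω : Type*} [MeasurableSpace Ω] (P : Measure Ω) [IsProbabilityMeasure P]
    (γ : ℝ) (q : ℕ) (hq : 1 ≤ q) (K : (Fin q → ℝ) → ℝ) (hK : Measurable K)
    (hLS : LocScaleInvariant K) (ℓ n : ℕ) (hℓ : 1 ≤ ℓ) (hn : q ≤ n)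
    (Z : ℕ → Ω → ℝ) (hZmeas : ∀ i, Measurable (Z i)) (hIndep : iIndepFun Z P)
    (hDist : ∀ i, Measure.map (Z i) P = gpMeasure γ) (s t : Set ℝ) (hs : MeasurableSet s)
    (ht : MeasurableSet t) :
    P {ω | Ncount q Z ℓ (n+ℓ) ω = 0 ∧ Km K n (blkA Z 0 n ω) ∈ s ∧ Km K n (blkA Z (n+ℓ) n ω) ∈ t}
      = (∫⁻ zB, (gpPi γ n (evA q ℓ n zB)) ^ 2 ∂(gpPi γ ℓ)) *
        (gpPi γ (q-1) {z | K (refVec z) ∈ s} * gpPi γ (q-1) {z | K (refVec z) ∈ t}) := by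
  let W : Set ((Fin ℓ → ℝ) × (Fin n → ℝ) × (Fin n → ℝ)) :=
    {x | (x.2.1 ∈ evA q ℓ n x.1 ∧ Km K n x.2.1 ∈ s) ∧ (x.2.2 ∈ evA q ℓ n x.1 ∧ Km K n x.2.2 ∈ t)}
  have hW : MeasurableSet W := by
    refine MeasurableSet.inter (MeasurableSet.inter ?_ ?_) (MeasurableSet.inter ?_ ?_)
    · exact (show Measurable fun x : (Fin ℓ → ℝ) × (Fin n → ℝ) × (Fin n → ℝ) => (x.1, x.2.1) by
        fun_prop) (measurableSet_evA2 q ℓ n)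
    · exact ((measurable_Km hK n).comp (measurable_fst.comp measurable_snd)) hs
    · exact (show Measurable fun x : (Fin ℓ → ℝ) × (Fin n → ℝ) × (Fin n → ℝ) => (x.1, x.2.2) by
        fun_prop) (measurableSet_evA2 q ℓ n)
    · exact ((measurable_Km hK n).comp (measurable_snd.comp measurable_snd)) ht
  have h1 : P {ω | Ncount q Z ℓ (n+ℓ) ω = 0 ∧ Km K n (blkA Z 0 n ω) ∈ s ∧
      Km K n (blkA Z (n+ℓ) n ω) ∈ t} = (gpPi γ ℓ).prod ((gpPi γ n).prod (gpPi γ n)) W := by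
    rw [← law_blocks P γ Z hZmeas hIndep hDist ℓ n, Measure.map_apply _ hW]
    · congr 1
      ext ω
      simp only [Set.mem_preimage, W, Set.mem_ofPred_eq, Ncount_zero_iff']
      tauto
    · exact (measurable_blkA Z hZmeas _ _).prodMk
        ((measurable_blkA Z hZmeas _ _).prodMk (measurable_blkA Z hZmeas _ _))
  have hmA : Measurable fun zB : Fin ℓ → ℝ => gpPi γ n (evA q ℓ n zB) :=
    measurable_measure_prodMk_left (measurableSet_evA2 q ℓ n)
  rw [h1, Measure.prod_apply hW, ← lintegral_mul_const _ (hmA.pow_const 2)]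
  refine lintegral_congr fun zB => ?_
  have h2 : Prod.mk zB ⁻¹' W = {z | z ∈ evA q ℓ n zB ∧ Km K n z ∈ s} ×ˢ
      {z | z ∈ evA q ℓ n zB ∧ Km K n z ∈ t} := by
    ext x
    rfl
  rw [h2, Measure.prod_prod]
  obtain ⟨b, _, hb⟩ := evA_eq q ℓ n hℓ zB
  have h3 := block_gp hq hn γ hK hLS (zB b) s hs
  have h4 := block_gp hq hn γ hK hLS (zB b) t ht
  rw [hb]
  refine Eq.trans (congrArg₂ (· * ·) h3 h4) ?_
  ring

lemma first_part {Ω : Type*} [MeasurableSpace Ω] (P : Measure Ω) [IsProbabilityMeasure P]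
    (γ : ℝ) (q : ℕ) (hq : 1 ≤ q) (K : (Fin q → ℝ) → ℝ) (hK : Measurable K)
    (hLS : LocScaleInvariant K) (ℓ n : ℕ) (hℓ : 1 ≤ ℓ) (hn : q ≤ n)
    (Z : ℕ → Ω → ℝ) (hZmeas : ∀ i, Measurable (Z i)) (hIndep : iIndepFun Z P)
    (hDist : ∀ i, Measure.map (Z i) P = gpMeasure γ) :
    P {ω | Ncount q Z ℓ (n+ℓ) ω = 0} = ∫⁻ zB, (gpPi γ n (evA q ℓ n zB)) ^ 2 ∂(gpPi γ ℓ) ∧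
    (∫ ω in {ω | Ncount q Z ℓ (n+ℓ) ω = 0}, XiRV K Z ℓ (n+ℓ) ω ∂P)
      = (P {ω | Ncount q Z ℓ (n+ℓ) ω = 0}).toReal * (thetaK γ K) ^ 2 := by
  have hmain := prob_main P γ q hq K hK hLS ℓ n hℓ hn Z hZmeas hIndep hDist
  have hP : P {ω | Ncount q Z ℓ (n+ℓ) ω = 0}
      = ∫⁻ zB, (gpPi γ n (evA q ℓ n zB)) ^ 2 ∂(gpPi γ ℓ) := by
    have := hmain Set.univ Set.univ MeasurableSet.univ MeasurableSet.univ
    simp only [Set.mem_univ, and_true] at this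
    have h3 : gpPi γ (q-1) {v | True} = 1 := by
      rw [show {v : Fin (q-1) → ℝ | True} = Set.univ from rfl]; exact measure_univ
    rw [h3, mul_one, mul_one] at this
    exact this
  refine ⟨hP, ?_⟩
  have hKA : ∀ s, Measurable fun ω => Km K n (blkA Z s n ω) := fun s =>
    (measurable_Km hK n).comp (measurable_blkA Z hZmeas s n)
  have hev : MeasurableSet {ω | Ncount q Z ℓ (n+ℓ) ω = 0} := by
    simp only [Ncount_zero_iff']
    exact (((measurable_blkA Z hZmeas n ℓ).prodMk (measurable_blkA Z hZmeas 0 n))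
      (measurableSet_evA2 q ℓ n)).inter
      (((measurable_blkA Z hZmeas n ℓ).prodMk (measurable_blkA Z hZmeas (n+ℓ) n))
      (measurableSet_evA2 q ℓ n))
  set ev := {ω | Ncount q Z ℓ (n+ℓ) ω = 0} with hevdef
  let law : Measure ℝ := (gpPi γ (q-1)).map fun z => K (refVec z)
  have hlaw : IsProbabilityMeasure law :=
    Measure.isProbabilityMeasure_map (measurable_Kref hK).aemeasurable
  have hfin : IsFiniteMeasure ((P ev) • law) := Measure.smul_finite _ (measure_ne_top _ _)
  have hpair : Measurable fun ω => (Km K n (blkA Z 0 n ω), Km K n (blkA Z (n+ℓ) n ω)) :=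
    (hKA 0).prodMk (hKA (n+ℓ))
  have hρ : ((P ev) • law).prod law = (P.restrict ev).map
      fun ω => (Km K n (blkA Z 0 n ω), Km K n (blkA Z (n+ℓ) n ω)) := by
    refine Measure.prod_eq fun s t hs ht => ?_
    rw [Measure.map_apply hpair (hs.prod ht), Measure.restrict_apply (hpair (hs.prod ht)),
      Measure.smul_apply, smul_eq_mul, Measure.map_apply (measurable_Kref hK) hs,
      Measure.map_apply (measurable_Kref hK) ht, hP, mul_assoc]
    refine Eq.trans ?_ (hmain s t hs ht)
    congr 1
    ext ω
    simp only [Set.mem_inter_iff, Set.mem_preimage, Set.mem_prod, hevdef, Set.mem_ofPred_eq]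
    tauto
  have hθ : ∫ x, x ∂law = thetaK γ K := by
    rw [integral_map (measurable_Kref hK).aemeasurable (by fun_prop)]
    rfl
  have h1 : ∫ ω in ev, XiRV K Z ℓ (n+ℓ) ω ∂P
      = ∫ ω in ev, Km K n (blkA Z 0 n ω) * Km K n (blkA Z (n+ℓ) n ω) ∂P :=
    setIntegral_congr_fun hev fun ω hω => XiRV_eq K Z ℓ n hn ω hω
  have h2 : ∫ ω in ev, Km K n (blkA Z 0 n ω) * Km K n (blkA Z (n+ℓ) n ω) ∂P
      = ∫ x : ℝ × ℝ, x.1 * x.2 ∂(((P ev) • law).prod law) := by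
    rw [hρ, integral_map hpair.aemeasurable (by fun_prop)]
  rw [h1, h2, integral_prod_mul (fun x : ℝ => x) (fun x : ℝ => x), integral_smul_measure, hθ]
  simp [pow_two, mul_assoc]


def bb : ℕ → ℕ → ℝ → ℝ
  | _, 0, _ => 0
  | 0, _ + 1, _ => 1
  | n + 1, q + 1, u => (1 - u) * bb n (q + 1) u + u * bb n q u

lemma bb_zero (n : ℕ) (u : ℝ) : bb n 0 u = 0 := by cases n <;> rfl
lemma bb_zero_succ (q : ℕ) (u : ℝ) : bb 0 (q+1) u = 1 := rfl
lemma bb_succ (n q : ℕ) (u : ℝ) :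
    bb (n+1) (q+1) u = (1 - u) * bb n (q + 1) u + u * bb n q u := rfl

lemma bb_range {u : ℝ} (h0 : 0 ≤ u) (h1 : u ≤ 1) : ∀ n q : ℕ, 0 ≤ bb n q u ∧ bb n q u ≤ 1 := by
  intro n
  induction n with
  | zero => intro q; cases q <;> simp [bb]
  | succ n ih =>
    intro q
    cases q with
    | zero => simp [bb]
    | succ q =>
      rw [bb_succ]
      have a := ih q
      have b := ih (q+1)
      constructor
      · have := mul_nonneg (sub_nonneg.2 h1) b.1
        have := mul_nonneg h0 a.1
        linarith
      · have := mul_le_mul_of_nonneg_left b.2 (sub_nonneg.2 h1)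
        have := mul_le_mul_of_nonneg_left a.2 h0
        linarith

lemma bb_mono {u : ℝ} (h0 : 0 ≤ u) (h1 : u ≤ 1) : ∀ n q : ℕ, bb n q u ≤ bb n (q+1) u := by
  intro n
  induction n with
  | zero => intro q; cases q <;> simp [bb]
  | succ n ih =>
    intro q
    cases q with
    | zero => rw [bb_zero]; exact (bb_range h0 h1 _ _).1
    | succ q =>
      rw [bb_succ, bb_succ]
      have := mul_le_mul_of_nonneg_left (ih q) h0
      have := mul_le_mul_of_nonneg_left (ih (q+1)) (sub_nonneg.2 h1)
      linarith

lemma bb_cont : ∀ n q : ℕ, Continuous (bb n q) := by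
  intro n
  induction n with
  | zero =>
    intro q
    cases q with
    | zero => exact continuous_const
    | succ q => exact continuous_const
  | succ n ih =>
    intro q
    cases q with
    | zero => exact continuous_const
    | succ q =>
      have a := ih q
      have b := ih (q+1)
      show Continuous fun u => (1 - u) * bb n (q + 1) u + u * bb n q u
      fun_prop

lemma bb_deriv (u : ℝ) : ∀ n q : ℕ,
    HasDerivAt (bb (n+1) (q+1)) (-((n:ℝ)+1) * (bb n (q+1) u - bb n q u)) u := by
  intro n
  induction n with
  | zero =>
    intro q
    have h1 : HasDerivAt (fun u : ℝ => (1 - u) * bb 0 (q + 1) u + u * bb 0 q u)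
        (-1 * bb 0 (q+1) u + 1 * bb 0 q u) u := by
      cases q with
      | zero =>
        have := ((hasDerivAt_id' u).const_sub 1)
        simp only [bb]
        simpa using this
      | succ q =>
        simp only [bb]
        have := (((hasDerivAt_id' u).const_sub 1).mul_const 1).add ((hasDerivAt_id' u).mul_const 1)
        exact this
    refine h1.congr_deriv ?_
    push_cast; ring
  | succ n ih =>
    intro q
    have e : bb (n+1+1) (q+1) = fun u : ℝ => (1 - u) * bb (n+1) (q + 1) u + u * bb (n+1) q u := rfl
    rw [e]
    cases q with
    | zero =>
      have := (((hasDerivAt_id' u).const_sub 1).mul (ih 0))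
      simp only [bb_zero, mul_zero, add_zero, sub_zero] at this ⊢
      refine this.congr_deriv ?_
      rw [bb_succ, bb_zero]
      push_cast; ring
    | succ q =>
      have := (((hasDerivAt_id' u).const_sub 1).mul (ih (q+1))).add
        ((hasDerivAt_id' u).mul (ih q))
      refine this.congr_deriv ?_
      rw [bb_succ n (q+1), bb_succ n q]
      push_cast; ring

lemma bb_weight (u : ℝ) : ∀ n q : ℕ, ((n:ℝ)+1) * (u * (bb n (q+1) u - bb n q u))
    = ((q:ℝ)+1) * (bb (n+1) (q+2) u - bb (n+1) (q+1) u) := by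
  intro n
  induction n with
  | zero =>
    intro q
    cases q with
    | zero => simp [bb]
    | succ q => simp [bb]
  | succ n ih =>
    intro q
    rw [bb_succ (n+1) (q+1), bb_succ (n+1) q]
    cases q with
    | zero =>
      have h0 := ih 0
      have e1 := bb_succ n 1 u
      have e2 := bb_succ n 0 u
      rw [bb_zero] at *
      push_cast at *
      simp only [zero_add] at *
      linear_combination (1-u) * h0 + (n+1) * u * e2
    | succ q =>
      have h0 := ih q
      have h1 := ih (q+1)
      have e1 := bb_succ n (q+1) u
      have e2 := bb_succ n q u
      push_cast at *
      linear_combination (1-u) * h1 + u * h0 + (n+1) * u * (e1 - e2)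

lemma int_w (n q : ℕ) : ∫ u in (0:ℝ)..1, (bb n (q+1) u - bb n q u) ≤ 1 / ((n:ℝ)+1) := by
  have hc : Continuous fun u => -((n:ℝ)+1) * (bb n (q+1) u - bb n q u) := by
    have := bb_cont n (q+1); have := bb_cont n q; fun_prop
  have h := intervalIntegral.integral_eq_sub_of_hasDerivAt (a := (0:ℝ)) (b := 1)
    (fun u _ => bb_deriv u n q) (hc.intervalIntegrable _ _)
  rw [intervalIntegral.integral_const_mul] at h
  have h1 := (bb_range (u := 0) le_rfl zero_le_one (n+1) (q+1)).2
  have h2 := (bb_range (u := 1) zero_le_one le_rfl (n+1) (q+1)).1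
  rw [le_div_iff₀ (by positivity)]
  linarith

lemma int_u_bb (n q : ℕ) : ∫ u in (0:ℝ)..1, u * bb n q u
    ≤ (q:ℝ) * (q+1) / (2 * (((n:ℝ)+1) * ((n:ℝ)+2))) := by
  induction q with
  | zero => simp [bb_zero]
  | succ q ih =>
    have c1 := bb_cont n q
    have c2 := bb_cont n (q+1)
    have e : ∀ u : ℝ, u * bb n (q+1) u = u * bb n q u + ((q:ℝ)+1) / ((n:ℝ)+1) *
        (bb (n+1) (q+2) u - bb (n+1) (q+1) u) := by
      intro u
      have := bb_weight u n q
      field_simp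
      linarith
    have c3 := bb_cont (n+1) (q+2)
    have c4 := bb_cont (n+1) (q+1)
    simp_rw [e]
    rw [intervalIntegral.integral_add, intervalIntegral.integral_const_mul]
    · have h := int_w (n+1) (q+1)
      have h2 := mul_le_mul_of_nonneg_left h (show 0 ≤ ((q:ℝ)+1) / ((n:ℝ)+1) by positivity)
      refine (add_le_add ih h2).trans (le_of_eq ?_)
      push_cast
      have : (n:ℝ) + 1 + 1 = n + 2 := by ring
      rw [this]
      field_simp
      ring
    · apply Continuous.intervalIntegrable; fun_prop
    · apply Continuous.intervalIntegrable; fun_prop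

def TT (q k n : ℕ) : ℝ := ∫ u in (0:ℝ)..1, (1-u)^k * (1 - (1 - bb n q u)^2)

lemma TT_step (q k n : ℕ) : 0 ≤ TT (q+1) k (n+1) - TT (q+1) (k+1) n ∧
    TT (q+1) k (n+1) - TT (q+1) (k+1) n ≤ ((q:ℝ)+1)^2 / (((n:ℝ)+1)*((n:ℝ)+2)) := by
  have c1 := bb_cont n q
  have c2 := bb_cont n (q+1)
  have c3 := bb_cont (n+1) (q+1)
  have e : TT (q+1) k (n+1) - TT (q+1) (k+1) n = ∫ u in (0:ℝ)..1, (1-u)^k *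
      (u * ((1 - (1 - bb n q u)^2) + (1-u) * (bb n (q+1) u - bb n q u)^2)) := by
    unfold TT
    rw [← intervalIntegral.integral_sub]
    · refine intervalIntegral.integral_congr fun u _ => ?_
      simp only [bb_succ]
      ring
    · apply Continuous.intervalIntegrable; fun_prop
    · apply Continuous.intervalIntegrable; fun_prop
  have key : ∀ u ∈ Icc (0:ℝ) 1, 0 ≤ (1-u)^k *
      (u * ((1 - (1 - bb n q u)^2) + (1-u) * (bb n (q+1) u - bb n q u)^2)) ∧ (1-u)^k *
      (u * ((1 - (1 - bb n q u)^2) + (1-u) * (bb n (q+1) u - bb n q u)^2))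
        ≤ u * bb n (q+1) u + u * bb n q u := by
    rintro u ⟨h0, h1⟩
    obtain ⟨a0, a1⟩ := bb_range h0 h1 n q
    obtain ⟨b0, b1⟩ := bb_range h0 h1 n (q+1)
    have hm := bb_mono h0 h1 n q
    set b := bb n (q+1) u
    set c := bb n q u
    have hs0 : 0 ≤ 1 - u := by linarith
    have hp0 : 0 ≤ (1-u)^k := pow_nonneg hs0 k
    have hp1 : (1-u)^k ≤ 1 := pow_le_one₀ hs0 (by linarith)
    have hin0 : 0 ≤ (1 - (1 - c)^2) + (1-u) * (b-c)^2 := by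
      have := mul_nonneg hs0 (sq_nonneg (b-c))
      nlinarith
    have hin1 : (1 - (1 - c)^2) + (1-u) * (b-c)^2 ≤ b + c := by
      have : (1-u) * (b-c)^2 ≤ 1 * (b-c)^2 :=
        mul_le_mul_of_nonneg_right (by linarith) (sq_nonneg _)
      nlinarith
    have hu0 := mul_nonneg h0 hin0
    refine ⟨mul_nonneg hp0 hu0, ?_⟩
    calc _ ≤ 1 * (u * ((1 - (1 - c)^2) + (1-u) * (b-c)^2)) := mul_le_mul_of_nonneg_right hp1 hu0
      _ ≤ u * (b + c) := by rw [one_mul]; exact mul_le_mul_of_nonneg_left hin1 h0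
      _ = _ := by ring
  rw [e]
  constructor
  · exact intervalIntegral.integral_nonneg zero_le_one fun u hu => (key u hu).1
  · have h1 : ∫ u in (0:ℝ)..1, (1-u)^k *
      (u * ((1 - (1 - bb n q u)^2) + (1-u) * (bb n (q+1) u - bb n q u)^2))
      ≤ ∫ u in (0:ℝ)..1, (u * bb n (q+1) u + u * bb n q u) := by
      refine intervalIntegral.integral_mono_on zero_le_one ?_ ?_ fun u hu => (key u hu).2
      · apply Continuous.intervalIntegrable; fun_prop
      · apply Continuous.intervalIntegrable; fun_prop
    rw [intervalIntegral.integral_add] at h1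
    · refine h1.trans ((add_le_add (int_u_bb n (q+1)) (int_u_bb n q)).trans (le_of_eq ?_))
      push_cast
      field_simp
      ring
    · apply Continuous.intervalIntegrable; fun_prop
    · apply Continuous.intervalIntegrable; fun_prop

lemma TT_tele (q k : ℕ) : ∀ n, 0 ≤ TT (q+1) 0 (n+k) - TT (q+1) k n ∧
    TT (q+1) 0 (n+k) - TT (q+1) k n ≤ ((q:ℝ)+1)^2 * (1 / ((n:ℝ)+1) - 1 / ((n:ℝ)+k+1)) := by
  induction k with
  | zero => intro n; simp
  | succ k ih =>
    intro n
    have h1 := ih (n+1)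
    have h2 := TT_step q k n
    have e : n + 1 + k = n + (k+1) := by ring
    rw [e] at h1
    constructor
    · linarith
    · have h3 := add_le_add h1.2 h2.2
      have : ((q:ℝ)+1)^2 * (1 / (((n+1:ℕ):ℝ)+1) - 1 / (((n+1:ℕ):ℝ)+k+1)) +
          ((q:ℝ)+1)^2 / (((n:ℝ)+1)*((n:ℝ)+2))
          = ((q:ℝ)+1)^2 * (1 / ((n:ℝ)+1) - 1 / ((n:ℝ)+(k+1:ℕ)+1)) := by
        push_cast
        field_simp
        ring
      linarith

lemma real_bound (q k n : ℕ) (hn : 1 ≤ n) (D : ℝ)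
    (hD : D = ((k:ℝ)+1) * (TT (q+1) 0 (n+k) - TT (q+1) k n)) :
    0 ≤ D ∧ D ≤ ((q:ℝ)+1)^2 * ((k:ℝ)+1) * k / (((n:ℝ)+k) * ((n:ℝ)+1)) := by
  obtain ⟨h1, h2⟩ := TT_tele q k n
  have hk : 0 ≤ (k:ℝ) + 1 := by positivity
  have hn' : 1 ≤ (n:ℝ) := by exact_mod_cast hn
  rw [hD]
  refine ⟨mul_nonneg hk h1, (mul_le_mul_of_nonneg_left h2 hk).trans ?_⟩
  have : ((k:ℝ)+1) * (((q:ℝ)+1)^2 * (1 / ((n:ℝ)+1) - 1 / ((n:ℝ)+k+1)))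
      = ((q:ℝ)+1)^2 * ((k:ℝ)+1) * k / (((n:ℝ)+k+1) * ((n:ℝ)+1)) := by
    field_simp; ring
  rw [this]
  refine div_le_div_of_nonneg_left (by positivity) (by positivity) ?_
  exact mul_le_mul_of_nonneg_right (by linarith) (by positivity)


lemma measurableSet_cnt (n q : ℕ) (x : ℝ) :
    MeasurableSet {u : Fin n → ℝ | (Finset.univ.filter fun a => u a < x).card < q} :=
  (measurable_card_filter (fun a (u : Fin n → ℝ) => u a < x)
    (fun a => measurableSet_lt (measurable_pi_apply a) measurable_const))
    (measurableSet_Iio (a := q))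

lemma unif01_Iio {x : ℝ} (h0 : 0 ≤ x) (h1 : x ≤ 1) : unif01.real (Iio x) = x := by
  rw [unif01, measureReal_def, Measure.restrict_apply measurableSet_Iio,
    show Iio x ∩ Ioo 0 1 = Ioo 0 x by
      ext t; simp only [Set.mem_inter_iff, Set.mem_Iio, Set.mem_Ioo]
      exact ⟨fun h => ⟨h.2.1, h.1⟩, fun h => ⟨h.2, h.1, h.2.trans_le h1⟩⟩]
  simp [h0]

lemma upi_cnt {x : ℝ} (h0 : 0 ≤ x) (h1 : x ≤ 1) : ∀ n q : ℕ,
    (upi (Fin n)).real {u | (Finset.univ.filter fun a => u a < x).card < q} = bb n q x := by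
  intro n
  induction n with
  | zero =>
    intro q
    cases q with
    | zero => simp [bb]
    | succ q => simp [bb]
  | succ n ih =>
    intro q
    cases q with
    | zero => simp [bb]
    | succ q =>
      have hmp := measurePreserving_piFinSuccAbove (fun _ : Fin (n+1) => unif01) 0
      let S : Set (ℝ × (Fin n → ℝ)) :=
        (Iio x ×ˢ {u | (Finset.univ.filter fun a => u a < x).card < q}) ∪
        (Ici x ×ˢ {u | (Finset.univ.filter fun a => u a < x).card < q+1})
      have hS1 := measurableSet_Iio.prod (measurableSet_cnt n q x) (s := Iio x)
      have hS2 := measurableSet_Ici.prod (measurableSet_cnt n (q+1) x) (s := Ici x)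
      have hS : MeasurableSet S := hS1.union hS2
      have e : {u : Fin (n+1) → ℝ | (Finset.univ.filter fun a => u a < x).card < q+1}
          = (MeasurableEquiv.piFinSuccAbove (fun _ : Fin (n+1) => ℝ) 0) ⁻¹' S := by
        ext u
        simp only [S, Set.mem_ofPred_eq, Set.mem_preimage, Set.mem_union, Set.mem_prod, Set.mem_Iio,
          Set.mem_Ici, MeasurableEquiv.piFinSuccAbove_apply, Fin.insertNthEquiv_symm_apply]
        rw [Fin.card_filter_univ_succ]
        simp only [Fin.removeNth, Fin.zero_succAbove]
        by_cases hx : u 0 < x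
        · simp [hx, hx.not_ge]
          convert Iff.rfl <;> rfl
        · simp [hx, not_lt.1 hx]
          convert Iff.rfl <;> rfl
      rw [e, measureReal_def]
      have h := hmp.measure_preimage hS.nullMeasurableSet
      unfold upi
      rw [h, ← measureReal_def]
      rw [measureReal_union (by
        rw [Set.disjoint_left]
        rintro ⟨a, b⟩ ⟨ha, _⟩ ⟨hb, _⟩
        exact not_lt.2 (Set.mem_Ici.1 hb) (Set.mem_Iio.1 ha)) hS2]
      rw [measureReal_prod_prod, measureReal_prod_prod, unif01_Iio h0 h1]
      have hc : unif01.real (Ici x) = 1 - x := by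
        have := probReal_compl_eq_one_sub (μ := unif01) (measurableSet_Iio (a := x))
        rw [unif01_Iio h0 h1, Set.compl_Iio] at this
        exact this
      have i1 := ih q
      have i2 := ih (q+1)
      unfold upi at i1 i2
      rw [hc, bb_succ]
      have e1 : (Measure.pi fun j : Fin n => unif01).real
        {u | (Finset.univ.filter fun a => u a < x).card < q} = bb n q x := i1
      have e2 : (Measure.pi fun j : Fin n => unif01).real
        {u | (Finset.univ.filter fun a => u a < x).card < q+1} = bb n (q+1) x := i2
      refine Eq.trans (congrArg₂ (fun a b => x * a + (1-x) * b) e1 e2) ?_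
      ring

def minD (k : ℕ) (t : ℝ) : ℝ≥0∞ := ENNReal.ofReal (((k:ℝ)+1) * (1-t)^k)

lemma measurable_minD (k : ℕ) : Measurable (minD k) := by unfold minD; fun_prop

lemma measurable_min (k : ℕ) : Measurable fun u : Fin (k+1) → ℝ => ⨅ i, u i :=
  Measurable.iInf fun i => measurable_pi_apply i

lemma Ici_ae (x : ℝ) : (Ici x ∩ Ioo 0 1 : Set ℝ) =ᵐ[volume] Ioo (max x 0) 1 := by
  have : (Ioi x ∩ Ioo 0 1 : Set ℝ) = Ioo (max x 0) 1 := by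
    ext t; simp only [Set.mem_inter_iff, Set.mem_Ioi, Set.mem_Ioo, max_lt_iff]; tauto
  rw [← this]
  exact Ioi_ae_eq_Ici.symm.inter (ae_eq_refl _)

lemma law_min (k : ℕ) : (upi (Fin (k+1))).map (fun u => ⨅ i, u i) = unif01.withDensity (minD k) := by
  have : IsProbabilityMeasure ((upi (Fin (k+1))).map (fun u => ⨅ i, u i)) :=
    Measure.isProbabilityMeasure_map (measurable_min k).aemeasurable
  refine Measure.ext_of_Ici _ _ fun x => ?_
  rw [Measure.map_apply (measurable_min k) measurableSet_Ici, withDensity_apply _ measurableSet_Ici]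
  have e : (fun u : Fin (k+1) → ℝ => ⨅ i, u i) ⁻¹' Ici x = Set.univ.pi fun _ => Ici x := by
    ext u
    simp only [Set.mem_preimage, Set.mem_Ici, Set.mem_univ_pi]
    exact le_ciInf_iff (Set.finite_range u).bddBelow
  rw [e, upi, Measure.pi_pi]
  simp only [Finset.prod_const, Finset.card_univ, Fintype.card_fin]
  rw [unif01, Measure.restrict_apply measurableSet_Ici, Measure.restrict_restrict measurableSet_Ici,
    setLIntegral_congr (Ici_ae x), measure_congr (Ici_ae x), Real.volume_Ioo]
  set y := max x 0
  rcases le_or_gt 1 y with hy | hy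
  · rw [Ioo_eq_empty (not_lt.2 hy), ENNReal.ofReal_of_nonpos (by linarith)]
    simp
  · unfold minD
    have hc : Continuous fun t : ℝ => ((k:ℝ)+1) * (1-t)^k := by fun_prop
    rw [restrict_Ioo_eq_restrict_Ioc, ← ofReal_integral_eq_lintegral_ofReal,
      ← intervalIntegral.integral_of_le hy.le, ← ENNReal.ofReal_pow (by linarith)]
    · congr 1
      have h := intervalIntegral.integral_eq_sub_of_hasDerivAt (a := y) (b := 1)
        (f := fun t => -(1-t)^(k+1)) (f' := fun t => ((k:ℝ)+1) * (1-t)^k) (fun t _ => by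
          have := (((hasDerivAt_id' t).const_sub 1).fun_pow (k+1)).fun_neg
          refine this.congr_deriv ?_
          push_cast; simp) (hc.intervalIntegrable _ _)
      rw [h]; simp
    · exact hc.integrableOn_Ioc
    · filter_upwards [ae_restrict_mem measurableSet_Ioc] with t ht
      have : 0 ≤ 1 - t := by linarith [ht.2]
      exact mul_nonneg (by positivity) (pow_nonneg this k)

lemma gp_evA (γ : ℝ) (q k n : ℕ) (uB : Fin (k+1) → ℝ) (huB : ∀ i, uB i ∈ Ioo (0:ℝ) 1) :
    gpPi γ n (evA q (k+1) n fun i => phiG γ (uB i)) = ENNReal.ofReal (1 - bb n q (⨅ i, uB i)) := by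
  have hmeas : MeasurableSet (evA q (k+1) n fun i => phiG γ (uB i)) :=
    measurable_prodMk_left (measurableSet_evA2 q (k+1) n)
  rw [gpPi_eq, Measure.map_apply (measurable_phiComp γ) hmeas]
  obtain ⟨b0, hb0⟩ := exists_eq_ciInf_of_finite (f := uB)
  set x := ⨅ i, uB i with hx
  have hx01 : x ∈ Ioo (0:ℝ) 1 := hb0 ▸ huB b0
  have hle : ∀ b, x ≤ uB b := fun b => ciInf_le (Set.finite_range uB).bddBelow b
  have hae : ((fun u i => phiG γ (u i)) ⁻¹' (evA q (k+1) n fun i => phiG γ (uB i)) : Set (Fin n → ℝ))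
      =ᵐ[upi (Fin n)] ({u | (Finset.univ.filter fun a => u a < x).card < q}ᶜ : Set (Fin n → ℝ)) := by
    filter_upwards [upi_mem (Fin n)] with u hu
    refine propext ?_
    have h1 : ∀ b, (Finset.univ.filter fun a => phiG γ (uB b) < phiG γ (u a))
        = Finset.univ.filter fun a => u a < uB b := by
      intro b
      ext a
      simp only [Finset.mem_filter, Finset.mem_univ, true_and]
      exact phiG_lt_iff γ (huB b).1 (hu a).1
    change (∀ b, q ≤ (Finset.univ.filter fun a => phiG γ (uB b) < phiG γ (u a)).card) ↔
      ¬ ((Finset.univ.filter fun a => u a < x).card < q)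
    rw [not_lt]
    simp only [h1]
    constructor
    · intro h; rw [← hb0]; exact h b0
    · intro h b
      refine h.trans (Finset.card_le_card fun a => ?_)
      simp only [Finset.mem_filter, Finset.mem_univ, true_and]
      exact fun h => h.trans_le (hle b)
  refine (measure_congr hae).trans ?_
  rw [← ofReal_measureReal, probReal_compl_eq_one_sub (measurableSet_cnt n q x),
    upi_cnt hx01.1.le hx01.2.le]

lemma prob_eq (γ : ℝ) (q k n : ℕ) :
    (∫⁻ zB, (gpPi γ n (evA q (k+1) n zB)) ^ 2 ∂(gpPi γ (k+1))).toReal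
      = 1 - ((k:ℝ)+1) * TT q k n := by
  have hm : Measurable fun zB : Fin (k+1) → ℝ => (gpPi γ n (evA q (k+1) n zB)) ^ 2 :=
    (measurable_measure_prodMk_left (measurableSet_evA2 q (k+1) n)).pow_const 2
  have cb := bb_cont n q
  have hg : Measurable fun t : ℝ => ENNReal.ofReal ((1 - bb n q t)^2) := by
    have := cb.measurable
    fun_prop
  rw [gpPi_eq γ (k+1), lintegral_map hm (measurable_phiComp γ)]
  have h1 : ∫⁻ u, (gpPi γ n (evA q (k+1) n fun i => phiG γ (u i))) ^ 2 ∂(upi (Fin (k+1)))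
      = ∫⁻ u, ENNReal.ofReal ((1 - bb n q (⨅ i, u i))^2) ∂(upi (Fin (k+1))) := by
    refine lintegral_congr_ae ?_
    filter_upwards [upi_mem (Fin (k+1))] with u hu
    obtain ⟨b0, hb0⟩ := exists_eq_ciInf_of_finite (f := u)
    have := bb_range (hb0 ▸ (hu b0).1.le) (hb0 ▸ (hu b0).2.le) n q
    rw [gp_evA γ q k n u hu, ENNReal.ofReal_pow (by linarith)]
  rw [h1, ← lintegral_map (f := fun t => ENNReal.ofReal ((1 - bb n q t)^2)) hg (measurable_min k),
    law_min, lintegral_withDensity_eq_lintegral_mul _ (measurable_minD k) hg]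
  have hc : Continuous fun t : ℝ => ((k:ℝ)+1) * (1-t)^k * (1 - bb n q t)^2 := by fun_prop
  have h2 : ∫⁻ t, (minD k * fun t => ENNReal.ofReal ((1 - bb n q t)^2)) t ∂unif01
      = ENNReal.ofReal (∫ t in (0:ℝ)..1, ((k:ℝ)+1) * (1-t)^k * (1 - bb n q t)^2) := by
    rw [unif01, restrict_Ioo_eq_restrict_Ioc, intervalIntegral.integral_of_le zero_le_one,
      ofReal_integral_eq_lintegral_ofReal]
    · refine setLIntegral_congr_fun measurableSet_Ioc fun t ht => ?_
      have : 0 ≤ 1 - t := by linarith [ht.2]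
      simp only [Pi.mul_apply, minD]
      rw [← ENNReal.ofReal_mul (mul_nonneg (by positivity) (pow_nonneg this k))]
    · exact hc.integrableOn_Ioc
    · filter_upwards [ae_restrict_mem measurableSet_Ioc] with t ht
      have : 0 ≤ 1 - t := by linarith [ht.2]
      exact mul_nonneg (mul_nonneg (by positivity) (pow_nonneg this k)) (sq_nonneg _)
  rw [h2, ENNReal.toReal_ofReal]
  · have h3 : ∫ t in (0:ℝ)..1, ((k:ℝ)+1) * (1-t)^k = 1 := by
      have hc : Continuous fun t : ℝ => ((k:ℝ)+1) * (1-t)^k := by fun_prop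
      have h := intervalIntegral.integral_eq_sub_of_hasDerivAt (a := 0) (b := 1)
        (f := fun t => -(1-t)^(k+1)) (f' := fun t => ((k:ℝ)+1) * (1-t)^k) (fun t _ => by
          have := (((hasDerivAt_id' t).const_sub 1).fun_pow (k+1)).fun_neg
          refine this.congr_deriv ?_
          push_cast; simp) (hc.intervalIntegrable _ _)
      rw [h]; simp
    refine Eq.trans ?_ (congrArg (· - ((k:ℝ)+1) * TT q k n) h3)
    unfold TT
    rw [← intervalIntegral.integral_const_mul, ← intervalIntegral.integral_sub]
    · refine intervalIntegral.integral_congr fun t _ => ?_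
      ring
    · apply Continuous.intervalIntegrable; fun_prop
    · apply Continuous.intervalIntegrable; fun_prop
  · refine intervalIntegral.integral_nonneg zero_le_one fun t ht => ?_
    have : 0 ≤ 1 - t := by linarith [ht.2]
    exact mul_nonneg (mul_nonneg (by positivity) (pow_nonneg this k)) (sq_nonneg _)

/-- Lemma: the event `N_{ℓ,m} = 0`.
`E[Ξ_{ℓ,m}; N_{ℓ,m} = 0] = P(N_{ℓ,m} = 0) θ²` and
`|E[Ξ_{ℓ,m}; N_{ℓ,m} = 0] - ℓ E[Ξ_{1,m}; N_{1,m} = 0] + (ℓ-1)θ²|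
  ≤ θ² q² ℓ(ℓ-1)/((m-1)(m-ℓ+1))`. -/
theorem xi_on_N_zero
    {Ω : Type*} [MeasurableSpace Ω] (P : Measure Ω) [IsProbabilityMeasure P]
    (γ : ℝ) (q : ℕ) (hq : 3 ≤ q)
    (K : (Fin q → ℝ) → ℝ) (hKmeas : Measurable K)
    (hLS : LocScaleInvariant K)
    (hNonconst : ∃ x y : Fin q → ℝ, K x ≠ K y)
    (hMom : MomentCond γ K)
    (ℓ m : ℕ) (hℓ : 2 ≤ ℓ) (hm : ℓ + q ≤ m)
    (Z : ℕ → Ω → ℝ) (hZmeas : ∀ i, Measurable (Z i))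
    (hIndep : iIndepFun Z P)
    (hDist : ∀ i, Measure.map (Z i) P = gpMeasure γ) :
    (∫ ω in {ω | Ncount q Z ℓ m ω = 0}, XiRV K Z ℓ m ω ∂P)
      = (P {ω | Ncount q Z ℓ m ω = 0}).toReal * (thetaK γ K) ^ 2
    ∧ |(∫ ω in {ω | Ncount q Z ℓ m ω = 0}, XiRV K Z ℓ m ω ∂P)
        - (ℓ : ℝ) * (∫ ω in {ω | Ncount q Z 1 m ω = 0}, XiRV K Z 1 m ω ∂P)
        + ((ℓ : ℝ) - 1) * (thetaK γ K) ^ 2|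
      ≤ (thetaK γ K) ^ 2 * (q : ℝ) ^ 2 * (ℓ : ℝ) * ((ℓ : ℝ) - 1) /
          (((m : ℝ) - 1) * ((m : ℝ) - (ℓ : ℝ) + 1)) := by
  obtain ⟨n, rfl⟩ : ∃ n, m = n + ℓ := ⟨m - ℓ, by omega⟩
  obtain ⟨k, rfl⟩ : ∃ k, ℓ = k + 1 := ⟨ℓ - 1, by omega⟩
  obtain ⟨r, rfl⟩ : ∃ r, q = r + 1 := ⟨q - 1, by omega⟩
  obtain ⟨hP, hE⟩ := first_part P γ (r+1) (by omega) K hKmeas hLS (k+1) n (by omega) (by omega)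
    Z hZmeas hIndep hDist
  obtain ⟨hP1, hE1⟩ := first_part P γ (r+1) (by omega) K hKmeas hLS 1 (n+k) le_rfl (by omega)
    Z hZmeas hIndep hDist
  refine ⟨hE, ?_⟩
  have e : n + k + 1 = n + (k + 1) := by omega
  have q1 := congrArg ENNReal.toReal hP
  have q2 := congrArg ENNReal.toReal hP1
  rw [prob_eq] at q1
  replace q2 := q2.trans (prob_eq γ (r+1) 0 (n+k))
  rw [e] at q2 hE1
  rw [hE, hE1, q1, q2]
  have hb := real_bound r k n (by omega) _ rfl
  set D := ((k:ℝ)+1) * (TT (r+1) 0 (n+k) - TT (r+1) k n) with hD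
  set θ := thetaK γ K
  have e1 : (1 - ((k:ℝ)+1) * TT (r+1) k n) * θ^2 - ((k+1:ℕ):ℝ) *
      ((1 - (((0:ℕ):ℝ)+1) * TT (r+1) 0 (n+k)) * θ^2) + (((k+1:ℕ):ℝ) - 1) * θ^2 = θ^2 * D := by
    rw [hD]; push_cast; ring
  rw [e1, abs_of_nonneg (mul_nonneg (sq_nonneg _) hb.1)]
  refine (mul_le_mul_of_nonneg_left hb.2 (sq_nonneg θ)).trans (le_of_eq ?_)
  push_cast
  rw [show (n:ℝ) + (k+1) - 1 = n + k by ring, show (n:ℝ) + (k+1) - (k+1) + 1 = n + 1 by ring]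
  ring

end
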